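/- arXiv:1310.3903 — 4 statements merged into one kernel-verified Lean document; each statement's English description precedes it below -/
import Mathlib

section
/- Let K and K' be regular Cantor sets with expanding maps g and g' respectively, such that HD(K) + HD(K') > 1 and the pair (g, g') belongs to the Moreira–Yoccoz class V. Let f: U → ℝ be a C¹ function on an open set U ⊂ ℝ² containing K × K', and suppose that at some point of K × K' the gradient of f is neither parallel to the x-axis nor to the y-axis (i.e. both partial derivatives are nonzero there). Then the image f(K × K') has non-empty interior in ℝ. -/
noncomputable section
open Set Filter Topology MeasureTheory
open scoped ENNReal Classical

/-- A regular Cantor set, given by a `C^r` (`r > 1`, i.e. `C¹` with Hölder derivative)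
expansive map `g` of type `Σ_𝔹`: branches `I(i,j) = [u i j, v i j] ⊆ I(i) = [a i, b i]`
for allowed transitions, each mapped diffeomorphically onto `I(j)`, with a topologically
mixing transition relation. -/
structure RegCantorSet where
  k : ℕ
  hk : 0 < k
  a : Fin k → ℝ
  b : Fin k → ℝ
  hab : ∀ i, a i < b i
  disj : ∀ i j, i ≠ j → Disjoint (Icc (a i) (b i)) (Icc (a j) (b j))
  trans : Fin k → Fin k → Prop
  u : Fin k → Fin k → ℝ
  v : Fin k → Fin k → ℝ
  branch_sub : ∀ i j, trans i j → a i ≤ u i j ∧ u i j < v i j ∧ v i j ≤ b i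
  branch_disj : ∀ i j j', trans i j → trans i j' → j ≠ j' →
    Disjoint (Icc (u i j) (v i j)) (Icc (u i j') (v i j'))
  g : ℝ → ℝ
  smooth : ContDiff ℝ 1 g
  holder : ∃ C r : NNReal, 0 < r ∧
    HolderOnWith C r (fun x => deriv g x)
      (⋃ i, ⋃ j, ⋃ (_ : trans i j), Icc (u i j) (v i j))
  expanding : ∀ i j, trans i j → ∀ x ∈ Icc (u i j) (v i j), 1 < |deriv g x|
  onto : ∀ i j, trans i j → g '' Icc (u i j) (v i j) = Icc (a j) (b j)
  inj : ∀ i j, trans i j → InjOn g (Icc (u i j) (v i j))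
  mixing : ∃ n₀ : ℕ, ∀ n, n₀ ≤ n → ∀ i j, ∃ w : ℕ → Fin k,
    w 0 = i ∧ w n = j ∧ ∀ m < n, trans (w m) (w (m + 1))

namespace RegCantorSet

variable (C : RegCantorSet)

/-- The domain `⋃ I(i,j)` of the expansive map. -/
def domain : Set ℝ := ⋃ i, ⋃ j, ⋃ (_ : C.trans i j), Icc (C.u i j) (C.v i j)

/-- The regular Cantor set: the maximal invariant set of `g`. -/
def K : Set ℝ := {x | ∀ n : ℕ, C.g^[n] x ∈ C.domain}

/-- The inverse branch `f_{i,j} = (g|_{I(i,j)})⁻¹ : I(j) → I(i,j)`. -/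
def finv (i j : Fin C.k) : ℝ → ℝ := Function.invFunOn C.g (Icc (C.u i j) (C.v i j))

/-- A left-infinite admissible word `θ = (…, θ_{-1}, θ_0)`, recorded as `θ : ℕ → Fin k`
with `θ n = θ_{-n}`. -/
def LeftAdmissible (θ : ℕ → Fin C.k) : Prop := ∀ n : ℕ, C.trans (θ (n + 1)) (θ n)

/-- The composed inverse branch `f_{θⁿ} = f_{θ_{-n},θ_{-n+1}} ∘ ⋯ ∘ f_{θ_{-1},θ_0}`. -/
def fword (θ : ℕ → Fin C.k) : ℕ → ℝ → ℝ
  | 0 => id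
  | n + 1 => C.finv (θ (n + 1)) (θ n) ∘ fword θ n

/-- The normalized inverse branch `k_n^θ = B(θⁿ) ∘ f_{θⁿ}`, where `B(θⁿ)` is the
orientation-compatible affine map from `I(θⁿ)` onto `I(θ₀)`. -/
def limGeomApprox (θ : ℕ → Fin C.k) (n : ℕ) (x : ℝ) : ℝ :=
  let F := C.fword θ n
  let J := F '' Icc (C.a (θ 0)) (C.b (θ 0))
  if MonotoneOn F (Icc (C.a (θ 0)) (C.b (θ 0))) then
    C.a (θ 0) + (F x - sInf J) * (C.b (θ 0) - C.a (θ 0)) / (sSup J - sInf J)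
  else
    C.a (θ 0) + (sSup J - F x) * (C.b (θ 0) - C.a (θ 0)) / (sSup J - sInf J)

/-- The limit geometry `k^θ = lim_n k_n^θ`. -/
def limGeom (θ : ℕ → Fin C.k) (x : ℝ) : ℝ :=
  limUnder atTop (fun n => C.limGeomApprox θ n x)

end RegCantorSet

/-- `h₁` is `ε`-close to `h` in the `C¹` sense on the set `s`. -/
def C1CloseOn (h₁ h : ℝ → ℝ) (s : Set ℝ) (ε : ℝ) : Prop :=
  ∀ x ∈ s, |h₁ x - h x| ≤ ε ∧ |derivWithin h₁ s x - derivWithin h s x| ≤ ε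

/-- The smooth configuration `(h, h')` of the pieces `K(i)`, `K'(i')` is stably
intersecting: every sufficiently small `C¹` perturbation of the configuration still
produces intersecting images of the Cantor set pieces. -/
def StablyIntersecting (C C' : RegCantorSet) (i : Fin C.k) (i' : Fin C'.k)
    (h h' : ℝ → ℝ) : Prop :=
  ∃ ε > 0, ∀ h₁ h₁' : ℝ → ℝ,
    ContDiffOn ℝ 1 h₁ (Icc (C.a i) (C.b i)) →
    ContDiffOn ℝ 1 h₁' (Icc (C'.a i') (C'.b i')) →
    C1CloseOn h₁ h (Icc (C.a i) (C.b i)) ε →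
    C1CloseOn h₁' h' (Icc (C'.a i') (C'.b i')) ε →
    (h₁ '' (C.K ∩ Icc (C.a i) (C.b i)) ∩
      h₁' '' (C'.K ∩ Icc (C'.a i') (C'.b i'))).Nonempty

/-- The Moreira–Yoccoz class `V`: for every relative configuration of limit geometries
`((θ,A), (θ',A'))` (with `A`, `A'` affine) there is a translation `R_t` making
`(R_t ∘ A ∘ k^θ, A' ∘ k'^{θ'})` a stably intersecting configuration. -/
def MemV (C C' : RegCantorSet) : Prop :=
  ∀ θ : ℕ → Fin C.k, C.LeftAdmissible θ →
  ∀ θ' : ℕ → Fin C'.k, C'.LeftAdmissible θ' →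
  ∀ p q p' q' : ℝ, p ≠ 0 → p' ≠ 0 →
  ∃ t : ℝ, StablyIntersecting C C' (θ 0) (θ' 0)
    (fun x => p * C.limGeom θ x + q + t)
    (fun x => p' * C'.limGeom θ' x + q')

namespace RegCantorSet

variable (C : RegCantorSet)

/-- Admissibility of the last `n` transitions. -/
def Adm (θ : ℕ → Fin C.k) (n : ℕ) : Prop := ∀ j < n, C.trans (θ (j + 1)) (θ j)

variable {C}

theorem Adm.mono {θ : ℕ → Fin C.k} {n m : ℕ} (h : C.Adm θ n) (hm : m ≤ n) : C.Adm θ m :=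
  fun j hj => h j (lt_of_lt_of_le hj hm)

theorem finv_mem {i j : Fin C.k} (h : C.trans i j) {s : ℝ} (hs : s ∈ Icc (C.a j) (C.b j)) :
    C.finv i j s ∈ Icc (C.u i j) (C.v i j) := by
  rw [← C.onto i j h] at hs
  exact Function.invFunOn_mem hs

theorem g_finv {i j : Fin C.k} (h : C.trans i j) {s : ℝ} (hs : s ∈ Icc (C.a j) (C.b j)) :
    C.g (C.finv i j s) = s := by
  rw [← C.onto i j h] at hs
  exact Function.invFunOn_eq hs

theorem g_mem {i j : Fin C.k} (h : C.trans i j) {x : ℝ} (hx : x ∈ Icc (C.u i j) (C.v i j)) :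
    C.g x ∈ Icc (C.a j) (C.b j) := by
  rw [← C.onto i j h]
  exact mem_image_of_mem _ hx

theorem finv_g {i j : Fin C.k} (h : C.trans i j) {x : ℝ} (hx : x ∈ Icc (C.u i j) (C.v i j)) :
    C.finv i j (C.g x) = x :=
  C.inj i j h (finv_mem h (g_mem h hx)) hx (g_finv h (g_mem h hx))

theorem branch_subset {i j : Fin C.k} (h : C.trans i j) :
    Icc (C.u i j) (C.v i j) ⊆ Icc (C.a i) (C.b i) :=
  Icc_subset_Icc (C.branch_sub i j h).1 (C.branch_sub i j h).2.2

theorem mem_domain {i j : Fin C.k} (h : C.trans i j) {x : ℝ}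
    (hx : x ∈ Icc (C.u i j) (C.v i j)) : x ∈ C.domain := by
  simp only [domain, mem_iUnion]
  exact ⟨i, j, h, hx⟩

theorem fword_mem {θ : ℕ → Fin C.k} {n : ℕ} (h : C.Adm θ n) {s : ℝ}
    (hs : s ∈ Icc (C.a (θ 0)) (C.b (θ 0))) :
    C.fword θ n s ∈ Icc (C.a (θ n)) (C.b (θ n)) := by
  induction n with
  | zero => simpa [fword] using hs
  | succ n ih =>
    exact branch_subset (h n n.lt_succ_self)
      (finv_mem (h n n.lt_succ_self) (ih (h.mono n.le_succ)))

theorem fword_branch {θ : ℕ → Fin C.k} {n : ℕ} (h : C.Adm θ (n + 1)) {s : ℝ}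
    (hs : s ∈ Icc (C.a (θ 0)) (C.b (θ 0))) :
    C.fword θ (n + 1) s ∈ Icc (C.u (θ (n + 1)) (θ n)) (C.v (θ (n + 1)) (θ n)) :=
  finv_mem (h n n.lt_succ_self) (fword_mem (h.mono n.le_succ) hs)

theorem fword_K {θ : ℕ → Fin C.k} {n : ℕ} (h : C.Adm θ n) {s : ℝ}
    (hs : s ∈ Icc (C.a (θ 0)) (C.b (θ 0))) (hK : s ∈ C.K) :
    C.fword θ n s ∈ C.K := by
  induction n with
  | zero => simpa [fword] using hK
  | succ n ih =>
    intro m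
    cases m with
    | zero => exact mem_domain (h n n.lt_succ_self) (fword_branch h hs)
    | succ m =>
      rw [Function.iterate_succ_apply]
      have : C.g (C.fword θ (n + 1) s) = C.fword θ n s :=
        g_finv (h n n.lt_succ_self) (fword_mem (h.mono n.le_succ) hs)
      rw [this]
      exact ih (h.mono n.le_succ) m

theorem fword_shift (θ : ℕ → Fin C.k) (n : ℕ) :
    C.fword θ (n + 1) = C.fword (fun j => θ (j + 1)) n ∘ C.finv (θ 1) (θ 0) := by
  induction n with
  | zero => rfl
  | succ n ih =>
    have : C.fword θ (n + 1 + 1) = C.finv (θ (n + 1 + 1)) (θ (n + 1)) ∘ C.fword θ (n + 1) := rfl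
    rw [this, ih]
    rfl

theorem fword_congr {θ θ' : ℕ → Fin C.k} {n : ℕ} (h : ∀ j ≤ n, θ j = θ' j) :
    C.fword θ n = C.fword θ' n := by
  induction n with
  | zero => rfl
  | succ n ih =>
    simp only [fword]
    rw [ih (fun j hj => h j (by omega)), h (n + 1) le_rfl, h n (by omega)]

theorem isCompact_domain : IsCompact C.domain := by
  unfold domain
  refine isCompact_iUnion fun i => isCompact_iUnion fun j => ?_
  by_cases h : C.trans i j
  · simpa [h] using isCompact_Icc
  · simp [h]

theorem continuous_dg : Continuous (deriv C.g) := C.smooth.continuous_deriv le_rfl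

variable (C) in
theorem exists_lam : ∃ l : ℝ, 1 < l ∧ ∀ x ∈ C.domain, l ≤ |deriv C.g x| := by
  rcases C.domain.eq_empty_or_nonempty with h | h
  · exact ⟨2, by norm_num, by simp [h]⟩
  · obtain ⟨x, hx, hm⟩ := isCompact_domain.exists_isMinOn h
      (continuous_dg (C := C)).abs.continuousOn
    refine ⟨_, ?_, fun y hy => hm hy⟩
    simp only [domain, mem_iUnion] at hx
    obtain ⟨i, j, hij, hx⟩ := hx
    exact C.expanding i j hij x hx

theorem finv_lip {l : ℝ} (hl : 1 < l) (hd : ∀ x ∈ C.domain, l ≤ |deriv C.g x|)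
    {i j : Fin C.k} (h : C.trans i j) {s t : ℝ} (hs : s ∈ Icc (C.a j) (C.b j))
    (ht : t ∈ Icc (C.a j) (C.b j)) :
    |C.finv i j s - C.finv i j t| ≤ l⁻¹ * |s - t| := by
  have key : ∀ x ∈ Icc (C.u i j) (C.v i j), ∀ y ∈ Icc (C.u i j) (C.v i j), x < y →
      l * |x - y| ≤ |C.g x - C.g y| := by
    intro x hx y hy hxy
    obtain ⟨c, hc, e⟩ := exists_deriv_eq_slope C.g hxy C.smooth.continuous.continuousOn
      (C.smooth.differentiable one_ne_zero).differentiableOn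
    have hcd := hd c (mem_domain h ⟨hx.1.trans hc.1.le, hc.2.le.trans hy.2⟩)
    rw [e, abs_div, le_div_iff₀ (by simpa using sub_ne_zero.2 hxy.ne')] at hcd
    rwa [abs_sub_comm x, abs_sub_comm (C.g x)]
  have hl0 : 0 < l := by linarith
  rw [inv_mul_eq_div, le_div_iff₀ hl0, mul_comm]
  conv_rhs => rw [← g_finv h hs, ← g_finv h ht]
  rcases lt_trichotomy (C.finv i j s) (C.finv i j t) with hh | hh | hh
  · exact key _ (finv_mem h hs) _ (finv_mem h ht) hh
  · simp [hh]
  · rw [abs_sub_comm, abs_sub_comm (C.g _)]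
    exact key _ (finv_mem h ht) _ (finv_mem h hs) hh

theorem fword_lip {l : ℝ} (hl : 1 < l) (hd : ∀ x ∈ C.domain, l ≤ |deriv C.g x|)
    {θ : ℕ → Fin C.k} {n : ℕ} (h : C.Adm θ n) {s t : ℝ}
    (hs : s ∈ Icc (C.a (θ 0)) (C.b (θ 0))) (ht : t ∈ Icc (C.a (θ 0)) (C.b (θ 0))) :
    |C.fword θ n s - C.fword θ n t| ≤ l⁻¹ ^ n * |s - t| := by
  induction n with
  | zero => simp [fword]
  | succ n ih =>
    have h0 := h.mono n.le_succ
    refine (finv_lip hl hd (h n n.lt_succ_self) (fword_mem h0 hs) (fword_mem h0 ht)).trans ?_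
    rw [pow_succ', mul_assoc]
    exact mul_le_mul_of_nonneg_left (ih h0) (by positivity)

theorem fword_continuousOn {θ : ℕ → Fin C.k} {n : ℕ} (h : C.Adm θ n) :
    ContinuousOn (C.fword θ n) (Icc (C.a (θ 0)) (C.b (θ 0))) := by
  obtain ⟨l, hl, hd⟩ := C.exists_lam
  have hl0 : 0 ≤ l⁻¹ ^ n := by positivity
  have : LipschitzOnWith ⟨l⁻¹ ^ n, hl0⟩ (C.fword θ n) (Icc (C.a (θ 0)) (C.b (θ 0))) := by
    refine LipschitzOnWith.of_dist_le_mul fun x hx y hy => ?_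
    rw [Real.dist_eq, Real.dist_eq]
    exact fword_lip hl hd h hx hy
  exact this.continuousOn

theorem dg_ne {i j : Fin C.k} (h : C.trans i j) {x : ℝ} (hx : x ∈ Icc (C.u i j) (C.v i j)) :
    deriv C.g x ≠ 0 := by
  intro h0
  have := C.expanding i j h x hx
  rw [h0] at this
  norm_num at this

theorem finv_deriv {i j : Fin C.k} (h : C.trans i j) {s : ℝ} (hs : s ∈ Icc (C.a j) (C.b j)) :
    HasDerivWithinAt (C.finv i j) (deriv C.g (C.finv i j s))⁻¹ (Icc (C.a j) (C.b j)) s := by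
  have hne := dg_ne h (finv_mem h hs)
  have hc : ContinuousOn (C.finv i j) (Icc (C.a j) (C.b j)) := by
    obtain ⟨l, hl, hd⟩ := C.exists_lam
    have hl0 : 0 ≤ l⁻¹ := by positivity
    have : LipschitzOnWith ⟨l⁻¹, hl0⟩ (C.finv i j) (Icc (C.a j) (C.b j)) := by
      refine LipschitzOnWith.of_dist_le_mul fun x hx y hy => ?_
      rw [Real.dist_eq, Real.dist_eq]
      exact finv_lip hl hd h hx hy
    exact this.continuousOn
  have hg : HasDerivAt C.g (deriv C.g (C.finv i j s)) (C.finv i j s) :=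
    ((C.smooth.differentiable one_ne_zero) _).hasDerivAt
  have h1 : HasFDerivWithinAt (C.finv i j) _ (Icc (C.a j) (C.b j)) s :=
    HasFDerivWithinAt.of_local_left_inverse (t := univ)
      (by simpa using (hc s hs).tendsto)
      (hg.hasFDerivAt_equiv hne).hasFDerivWithinAt hs
      (by filter_upwards [self_mem_nhdsWithin] with y hy using g_finv h hy)
  simpa using h1.hasDerivWithinAt

theorem fword_deriv {θ : ℕ → Fin C.k} {n : ℕ} (h : C.Adm θ n) {s : ℝ}
    (hs : s ∈ Icc (C.a (θ 0)) (C.b (θ 0))) :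
    HasDerivWithinAt (C.fword θ n)
      (∏ m ∈ Finset.range n, (deriv C.g (C.fword θ (m + 1) s))⁻¹)
      (Icc (C.a (θ 0)) (C.b (θ 0))) s := by
  induction n with
  | zero => simpa [fword] using hasDerivWithinAt_id s _
  | succ n ih =>
    have h0 := h.mono n.le_succ
    rw [Finset.prod_range_succ, mul_comm]
    exact (finv_deriv (h n n.lt_succ_self) (fword_mem h0 hs)).comp s (ih h0)
      (fun x hx => fword_mem h0 hx)

end RegCantorSet
/-- The diffeomorphism of `[a,b]` whose derivative is proportional to `exp ψ`. -/
def Nrm (a b : ℝ) (ψ : ℝ → ℝ) (s : ℝ) : ℝ :=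
  a + (b - a) * (∫ x in a..s, Real.exp (ψ x)) / (∫ x in a..b, Real.exp (ψ x))

section Nrm

variable {a b : ℝ} {ψ ψ₁ ψ₂ : ℝ → ℝ} {D δ : ℝ}

theorem cont_exp (hc : Continuous ψ) : Continuous (fun x => Real.exp (ψ x)) :=
  Real.continuous_exp.comp hc

theorem int_pos {s t : ℝ} (hst : s < t) (hc : Continuous ψ) :
    0 < ∫ x in s..t, Real.exp (ψ x) :=
  intervalIntegral.intervalIntegral_pos_of_pos ((cont_exp hc).intervalIntegrable _ _)
    (fun x => Real.exp_pos _) hst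

theorem int_lower {s t : ℝ} (hst : s ≤ t) (hc : Continuous ψ) (hD : ∀ x, |ψ x| ≤ D) :
    Real.exp (-D) * (t - s) ≤ ∫ x in s..t, Real.exp (ψ x) := by
  have := intervalIntegral.integral_mono_on (μ := volume) hst
    ((continuous_const (y := Real.exp (-D))).intervalIntegrable s t)
    ((cont_exp hc).intervalIntegrable s t)
    (fun x _ => Real.exp_le_exp.2 (abs_le.1 (hD x)).1)
  simpa [mul_comm] using this

theorem int_upper {s t : ℝ} (hst : s ≤ t) (hc : Continuous ψ) (hD : ∀ x, |ψ x| ≤ D) :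
    ∫ x in s..t, Real.exp (ψ x) ≤ Real.exp D * (t - s) := by
  have := intervalIntegral.integral_mono_on (μ := volume) hst
    ((cont_exp hc).intervalIntegrable s t)
    ((continuous_const (y := Real.exp D)).intervalIntegrable s t)
    (fun x _ => Real.exp_le_exp.2 (abs_le.1 (hD x)).2)
  simpa [mul_comm] using this

theorem Nrm_hasDerivAt (hc : Continuous ψ) (s : ℝ) :
    HasDerivAt (Nrm a b ψ) ((b - a) * Real.exp (ψ s) / (∫ x in a..b, Real.exp (ψ x))) s := by
  have h := ((cont_exp hc).integral_hasStrictDerivAt a s).hasDerivAt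
  exact ((h.const_mul (b - a)).div_const _).const_add a

theorem Nrm_contDiff (hc : Continuous ψ) : ContDiff ℝ 1 (Nrm a b ψ) := by
  rw [contDiff_one_iff_deriv]
  refine ⟨fun s => (Nrm_hasDerivAt hc s).differentiableAt, ?_⟩
  have : deriv (Nrm a b ψ) = fun s => (b - a) * Real.exp (ψ s) / (∫ x in a..b, Real.exp (ψ x)) :=
    funext fun s => (Nrm_hasDerivAt hc s).deriv
  rw [this]
  exact (continuous_const.mul (cont_exp hc)).div_const _

theorem Nrm_mem (hab : a < b) (hc : Continuous ψ) {s : ℝ} (hs : s ∈ Icc a b) :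
    Nrm a b ψ s ∈ Icc a b := by
  have hJ := int_pos hab hc
  have h1 : 0 ≤ ∫ x in a..s, Real.exp (ψ x) :=
    intervalIntegral.integral_nonneg hs.1 (fun x _ => (Real.exp_pos _).le)
  have h2 : 0 ≤ ∫ x in s..b, Real.exp (ψ x) :=
    intervalIntegral.integral_nonneg hs.2 (fun x _ => (Real.exp_pos _).le)
  have h3 := intervalIntegral.integral_add_adjacent_intervals
    ((cont_exp hc).intervalIntegrable (μ := volume) a s) ((cont_exp hc).intervalIntegrable s b)
  have hba : 0 ≤ b - a := by linarith
  unfold Nrm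
  constructor
  · have : 0 ≤ (b - a) * (∫ x in a..s, Real.exp (ψ x)) / (∫ x in a..b, Real.exp (ψ x)) := by
      positivity
    linarith
  · have : (b - a) * (∫ x in a..s, Real.exp (ψ x)) / (∫ x in a..b, Real.exp (ψ x)) ≤ b - a := by
      rw [div_le_iff₀ hJ]
      exact mul_le_mul_of_nonneg_left (by linarith) hba
    linarith

theorem Nrm_deriv_nonneg (hab : a < b) (hc : Continuous ψ) (s : ℝ) :
    0 ≤ (b - a) * Real.exp (ψ s) / (∫ x in a..b, Real.exp (ψ x)) := by
  have hJ := int_pos hab hc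
  have hba : 0 ≤ b - a := by linarith
  positivity

theorem Nrm_deriv_le (hab : a < b) (hc : Continuous ψ) (hD : ∀ x, |ψ x| ≤ D) (s : ℝ) :
    (b - a) * Real.exp (ψ s) / (∫ x in a..b, Real.exp (ψ x)) ≤ Real.exp (2 * D) := by
  have hJ := int_pos hab hc
  have hba : 0 < b - a := by linarith
  rw [div_le_iff₀ hJ]
  have h1 := int_lower hab.le hc hD
  have h2 : Real.exp (ψ s) ≤ Real.exp D := Real.exp_le_exp.2 (abs_le.1 (hD s)).2
  calc (b - a) * Real.exp (ψ s) ≤ (b - a) * Real.exp D := by gcongr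
    _ = Real.exp (2 * D) * (Real.exp (-D) * (b - a)) := by
        rw [← mul_assoc, ← Real.exp_add, mul_comm]; ring_nf
    _ ≤ _ := by gcongr

theorem Nrm_ratio (hab : a < b) (hc₁ : Continuous ψ₁) (hc₂ : Continuous ψ₂)
    (hδ : ∀ x, |ψ₁ x - ψ₂ x| ≤ δ) (s : ℝ) :
    (b - a) * Real.exp (ψ₁ s) / (∫ x in a..b, Real.exp (ψ₁ x)) ≤
      Real.exp (2 * δ) * ((b - a) * Real.exp (ψ₂ s) / (∫ x in a..b, Real.exp (ψ₂ x))) := by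
  have hJ₁ := int_pos hab hc₁
  have hJ₂ := int_pos hab hc₂
  have hba : 0 < b - a := by linarith
  have h1 : ∫ x in a..b, Real.exp (ψ₂ x) ≤ Real.exp δ * ∫ x in a..b, Real.exp (ψ₁ x) := by
    rw [← intervalIntegral.integral_const_mul]
    refine intervalIntegral.integral_mono_on hab.le ((cont_exp hc₂).intervalIntegrable _ _)
      ((continuous_const.mul (cont_exp hc₁)).intervalIntegrable _ _) (fun x _ => ?_)
    rw [← Real.exp_add]
    exact Real.exp_le_exp.2 (by have := (abs_le.1 (hδ x)).1; linarith)
  have h2 : Real.exp (ψ₁ s) ≤ Real.exp δ * Real.exp (ψ₂ s) := by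
    rw [← Real.exp_add]
    exact Real.exp_le_exp.2 (by have := (abs_le.1 (hδ s)).2; linarith)
  rw [mul_div_assoc', div_le_div_iff₀ hJ₁ hJ₂]
  have e : Real.exp (2 * δ) = Real.exp δ * Real.exp δ := by rw [← Real.exp_add]; ring_nf
  rw [e]
  calc (b - a) * Real.exp (ψ₁ s) * ∫ x in a..b, Real.exp (ψ₂ x)
      ≤ (b - a) * (Real.exp δ * Real.exp (ψ₂ s)) *
        (Real.exp δ * ∫ x in a..b, Real.exp (ψ₁ x)) := by gcongr
    _ = _ := by ring

theorem Nrm_deriv_close (hab : a < b) (hc₁ : Continuous ψ₁) (hc₂ : Continuous ψ₂)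
    (hD₁ : ∀ x, |ψ₁ x| ≤ D) (hD₂ : ∀ x, |ψ₂ x| ≤ D)
    (hδ : ∀ x, |ψ₁ x - ψ₂ x| ≤ δ) (s : ℝ) :
    |(b - a) * Real.exp (ψ₁ s) / (∫ x in a..b, Real.exp (ψ₁ x)) -
      (b - a) * Real.exp (ψ₂ s) / (∫ x in a..b, Real.exp (ψ₂ x))| ≤
      (Real.exp (2 * δ) - 1) * Real.exp (2 * D) := by
  have r1 := Nrm_ratio hab hc₁ hc₂ hδ s
  have r2 := Nrm_ratio hab hc₂ hc₁ (fun x => by rw [abs_sub_comm]; exact hδ x) s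
  have d1 := Nrm_deriv_le hab hc₁ hD₁ s
  have d2 := Nrm_deriv_le hab hc₂ hD₂ s
  have hδ0 : 0 ≤ δ := (abs_nonneg _).trans (hδ 0)
  have hE : 1 ≤ Real.exp (2 * δ) := Real.one_le_exp (by linarith)
  generalize (b - a) * Real.exp (ψ₁ s) / (∫ x in a..b, Real.exp (ψ₁ x)) = A at *
  generalize (b - a) * Real.exp (ψ₂ s) / (∫ x in a..b, Real.exp (ψ₂ x)) = B at *
  rw [abs_le]
  constructor
  · have := mul_le_mul_of_nonneg_left d1 (sub_nonneg.2 hE)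
    linarith
  · have := mul_le_mul_of_nonneg_left d2 (sub_nonneg.2 hE)
    linarith

theorem Nrm_close (hab : a < b) (hc₁ : Continuous ψ₁) (hc₂ : Continuous ψ₂)
    (hD₁ : ∀ x, |ψ₁ x| ≤ D) (hD₂ : ∀ x, |ψ₂ x| ≤ D)
    (hδ : ∀ x, |ψ₁ x - ψ₂ x| ≤ δ) {s : ℝ} (hs : s ∈ Icc a b) :
    |Nrm a b ψ₁ s - Nrm a b ψ₂ s| ≤ (Real.exp (2 * δ) - 1) * Real.exp (2 * D) * (b - a) := by
  have hδ0 : 0 ≤ δ := (abs_nonneg _).trans (hδ 0)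
  have hE : 0 ≤ Real.exp (2 * δ) - 1 := sub_nonneg.2 (Real.one_le_exp (by linarith))
  have := (convex_Icc a b).norm_image_sub_le_of_norm_hasDerivWithin_le
    (f := fun x => Nrm a b ψ₁ x - Nrm a b ψ₂ x)
    (fun x _ => ((Nrm_hasDerivAt hc₁ x).sub (Nrm_hasDerivAt hc₂ x)).hasDerivWithinAt)
    (fun x _ => Nrm_deriv_close hab hc₁ hc₂ hD₁ hD₂ hδ x) (left_mem_Icc.2 hab.le) hs
  have e : Nrm a b ψ₁ a - Nrm a b ψ₂ a = 0 := by simp [Nrm]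
  simp only [e, sub_zero, Real.norm_eq_abs] at this
  refine this.trans (mul_le_mul_of_nonneg_left ?_ (by positivity))
  rw [abs_of_nonneg (by linarith [hs.1])]
  linarith [hs.2]

end Nrm

namespace RegCantorSet

variable (C : RegCantorSet)

/-- clamp to the interval `I(i)` -/
def clamp (i : Fin C.k) (s : ℝ) : ℝ := max (C.a i) (min s (C.b i))

/-- The terms of the distortion series. -/
def dterm (θ : ℕ → Fin C.k) (m : ℕ) (s : ℝ) : ℝ :=
  Real.log (deriv C.g (C.fword θ (m + 1) (C.a (θ 0)))) -
    Real.log (deriv C.g (C.fword θ (m + 1) (C.clamp (θ 0) s)))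

/-- The partial sums of the distortion series. -/
def psi (θ : ℕ → Fin C.k) (n : ℕ) (s : ℝ) : ℝ := ∑ m ∈ Finset.range n, C.dterm θ m s

/-- The distortion series. -/
def psiInf (θ : ℕ → Fin C.k) (s : ℝ) : ℝ := ∑' m, C.dterm θ m s

variable {C}

theorem clamp_mem (i : Fin C.k) (s : ℝ) : C.clamp i s ∈ Icc (C.a i) (C.b i) :=
  ⟨le_max_left _ _, max_le (C.hab i).le (min_le_right _ _)⟩

theorem clamp_eq {i : Fin C.k} {s : ℝ} (hs : s ∈ Icc (C.a i) (C.b i)) : C.clamp i s = s := by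
  rw [clamp, min_eq_left hs.2, max_eq_right hs.1]

theorem clamp_continuous (i : Fin C.k) : Continuous (C.clamp i) := by
  unfold clamp; fun_prop

theorem left_mem (i : Fin C.k) : C.a i ∈ Icc (C.a i) (C.b i) := left_mem_Icc.2 (C.hab i).le

theorem log_sub_le {x y : ℝ} (hx : 1 ≤ |x|) (hy : 1 ≤ |y|) :
    |Real.log x - Real.log y| ≤ |x - y| := by
  have key : ∀ p q : ℝ, 1 ≤ p → 1 ≤ q → Real.log p - Real.log q ≤ |p - q| := by
    intro p q hp hq
    rw [← Real.log_div (by positivity) (by positivity)]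
    refine (Real.log_le_sub_one_of_pos (by positivity)).trans ?_
    have : p / q - 1 = (p - q) / q := by field_simp
    rw [this]
    refine (le_abs_self _).trans ?_
    rw [abs_div, abs_of_pos (by linarith : 0 < q)]
    exact div_le_self (abs_nonneg _) hq
  rw [← Real.log_abs x, ← Real.log_abs y]
  refine le_trans ?_ (abs_abs_sub_abs_le x y)
  rw [abs_le]
  constructor
  · have := key _ _ hy hx
    rw [abs_sub_comm |y|] at this
    linarith
  · exact key _ _ hx hy

variable (C) in
theorem exists_dterm_bound : ∃ B ρ : ℝ, 0 ≤ B ∧ 0 < ρ ∧ ρ < 1 ∧ ∀ (θ : ℕ → Fin C.k) (m : ℕ),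
    C.Adm θ (m + 1) → ∀ s, |C.dterm θ m s| ≤ B * ρ ^ m := by
  obtain ⟨l, hl, hd⟩ := C.exists_lam
  obtain ⟨H, r, hr, hh⟩ := C.holder
  have hr' : (0 : ℝ) < r := by exact_mod_cast hr
  set W : ℝ := ∑ i, (C.b i - C.a i) with hW
  have hpos : ∀ i, 0 < C.b i - C.a i := fun i => sub_pos.2 (C.hab i)
  have hW0 : 0 ≤ W := Finset.sum_nonneg fun i _ => (hpos i).le
  have hWi : ∀ i, C.b i - C.a i ≤ W := fun i =>
    Finset.single_le_sum (f := fun i => C.b i - C.a i) (fun i _ => (hpos i).le)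
      (Finset.mem_univ i)
  have hl0 : 0 < l := by linarith
  have hli : 0 < l⁻¹ := by positivity
  have hli1 : l⁻¹ < 1 := inv_lt_one_of_one_lt₀ hl
  have hρ0 : 0 < l⁻¹ ^ (r : ℝ) := Real.rpow_pos_of_pos hli _
  have hρ1 : l⁻¹ ^ (r : ℝ) < 1 := Real.rpow_lt_one hli.le hli1 hr'
  refine ⟨H * W ^ (r : ℝ), l⁻¹ ^ (r : ℝ), by positivity, hρ0, hρ1, fun θ m hθ s => ?_⟩
  have h1 := mem_domain (hθ m m.lt_succ_self) (fword_branch hθ (left_mem (θ 0)))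
  have h2 := mem_domain (hθ m m.lt_succ_self) (fword_branch hθ (clamp_mem (θ 0) s))
  unfold dterm
  refine (log_sub_le (hl.le.trans (hd _ h1)) (hl.le.trans (hd _ h2))).trans ?_
  have h3 := hh.dist_le h1 h2
  rw [Real.dist_eq, Real.dist_eq] at h3
  refine h3.trans ?_
  have h4 := fword_lip hl hd hθ (left_mem (θ 0)) (clamp_mem (θ 0) s)
  have h5 : |C.a (θ 0) - C.clamp (θ 0) s| ≤ W := by
    have := clamp_mem (θ 0) s
    rw [abs_sub_comm, abs_of_nonneg (by linarith [this.1])]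
    linarith [this.2, hWi (θ 0)]
  have h6 : |C.fword θ (m + 1) (C.a (θ 0)) - C.fword θ (m + 1) (C.clamp (θ 0) s)| ≤
      l⁻¹ ^ m * W := by
    refine h4.trans (mul_le_mul ?_ h5 (abs_nonneg _) (by positivity))
    exact pow_le_pow_of_le_one hli.le hli1.le m.le_succ
  have h7 := Real.rpow_le_rpow (abs_nonneg _) h6 hr'.le
  rw [Real.mul_rpow (by positivity) hW0, ← Real.rpow_natCast, ← Real.rpow_mul hli.le,
    mul_comm (m : ℝ), Real.rpow_mul hli.le, Real.rpow_natCast] at h7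
  calc (H : ℝ) * _ ^ (r : ℝ) ≤ H * ((l⁻¹ ^ (r : ℝ)) ^ m * W ^ (r : ℝ)) := by gcongr
    _ = _ := by ring

theorem dterm_continuous {θ : ℕ → Fin C.k} {m : ℕ} (h : C.Adm θ (m + 1)) :
    Continuous (C.dterm θ m) := by
  unfold dterm
  refine continuous_const.sub ?_
  have h1 : Continuous fun s => C.fword θ (m + 1) (C.clamp (θ 0) s) :=
    (fword_continuousOn h).comp_continuous (clamp_continuous _) (fun s => clamp_mem _ s)
  exact (continuous_dg.comp h1).log
    (fun s => dg_ne (h m m.lt_succ_self) (fword_branch h (clamp_mem (θ 0) s)))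

theorem psi_continuous {θ : ℕ → Fin C.k} {n : ℕ} (h : C.Adm θ n) :
    Continuous (C.psi θ n) := by
  unfold psi
  exact continuous_finsetSum _ fun m hm =>
    dterm_continuous (h.mono (Nat.succ_le_of_lt (Finset.mem_range.1 hm)))

theorem dterm_congr {θ θ' : ℕ → Fin C.k} {m N : ℕ} (h : ∀ j ≤ N, θ j = θ' j) (hm : m < N) :
    C.dterm θ m = C.dterm θ' m := by
  funext s
  unfold dterm
  rw [fword_congr (fun j hj => h j (by omega) : ∀ j ≤ m + 1, θ j = θ' j), h 0 (Nat.zero_le _)]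

theorem LeftAdmissible.adm {θ : ℕ → Fin C.k} (h : C.LeftAdmissible θ) (n : ℕ) : C.Adm θ n :=
  fun j _ => h j

section bounds

variable {B ρ : ℝ} (hB : 0 ≤ B) (hρ0 : 0 < ρ) (hρ1 : ρ < 1)
  (hb : ∀ (θ : ℕ → Fin C.k) (m : ℕ), C.Adm θ (m + 1) → ∀ s, |C.dterm θ m s| ≤ B * ρ ^ m)
include hB hρ0 hρ1 hb

theorem psi_tail {θ : ℕ → Fin C.k} {n N : ℕ} (h : C.Adm θ n) (hN : N ≤ n) (s : ℝ) :
    |C.psi θ n s - C.psi θ N s| ≤ B * ρ ^ N * (1 - ρ)⁻¹ := by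
  unfold psi
  rw [Finset.sum_range_sub_sum_range hN]
  refine (Finset.abs_sum_le_sum_abs _ _).trans ?_
  have hg : Summable fun m => B * ρ ^ N * ρ ^ m :=
    (summable_geometric_of_lt_one hρ0.le hρ1).mul_left _
  rw [← tsum_geometric_of_lt_one hρ0.le hρ1, ← tsum_mul_left]
  have e : Finset.filter (fun k => N ≤ k) (Finset.range n) = Finset.Ico N n := by
    ext; simp; omega
  rw [e, Finset.sum_Ico_eq_sum_range]
  refine le_trans (Finset.sum_le_sum fun m hm => ?_)
    (hg.sum_le_tsum (Finset.range (n - N)) (fun m _ => by positivity))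
  rw [mul_assoc, ← pow_add]
  exact hb θ (N + m) (h.mono (by have := Finset.mem_range.1 hm; omega)) s

theorem psi_bound {θ : ℕ → Fin C.k} {n : ℕ} (h : C.Adm θ n) (s : ℝ) :
    |C.psi θ n s| ≤ B * (1 - ρ)⁻¹ := by
  have := psi_tail hB hρ0 hρ1 hb h (Nat.zero_le n) s
  simpa [psi] using this

theorem psi_tendsto {θ : ℕ → Fin C.k} (h : C.LeftAdmissible θ) (s : ℝ) :
    Tendsto (fun n => C.psi θ n s) atTop (𝓝 (C.psiInf θ s)) := by
  have : Summable fun m => C.dterm θ m s :=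
    Summable.of_norm_bounded ((summable_geometric_of_lt_one hρ0.le hρ1).mul_left B)
      (fun m => hb θ m (h.adm _) s)
  exact this.hasSum.tendsto_sum_nat

theorem psiInf_tail {θ : ℕ → Fin C.k} {N : ℕ} (h : C.LeftAdmissible θ) (s : ℝ) :
    |C.psiInf θ s - C.psi θ N s| ≤ B * ρ ^ N * (1 - ρ)⁻¹ := by
  have h1 := ((psi_tendsto hB hρ0 hρ1 hb h s).sub_const (C.psi θ N s)).abs
  refine le_of_tendsto h1 ?_
  filter_upwards [eventually_ge_atTop N] with n hn
  exact psi_tail hB hρ0 hρ1 hb (h.adm n) hn s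

theorem psiInf_bound {θ : ℕ → Fin C.k} (h : C.LeftAdmissible θ) (s : ℝ) :
    |C.psiInf θ s| ≤ B * (1 - ρ)⁻¹ := by
  have := psiInf_tail hB hρ0 hρ1 hb (N := 0) h s
  simpa [psi] using this

theorem psiInf_continuous {θ : ℕ → Fin C.k} (h : C.LeftAdmissible θ) :
    Continuous (C.psiInf θ) :=
  continuous_tsum (fun m => dterm_continuous (h.adm _))
    ((summable_geometric_of_lt_one hρ0.le hρ1).mul_left B) (fun m s => hb θ m (h.adm _) s)

theorem psi_psiInf {θ θ' : ℕ → Fin C.k} {n N : ℕ} (h : C.LeftAdmissible θ) (h' : C.Adm θ' n)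
    (hN : N ≤ n) (he : ∀ j ≤ N, θ' j = θ j) (s : ℝ) :
    |C.psi θ' n s - C.psiInf θ s| ≤ 2 * (B * ρ ^ N * (1 - ρ)⁻¹) := by
  have h1 := psi_tail hB hρ0 hρ1 hb h' hN s
  have h2 := psiInf_tail hB hρ0 hρ1 hb (N := N) h s
  have h3 : C.psi θ' N s = C.psi θ N s := by
    unfold psi
    exact Finset.sum_congr rfl fun m hm => by rw [dterm_congr he (Finset.mem_range.1 hm)]
  rw [h3] at h1
  rw [abs_le] at *
  constructor <;> linarith [h1.1, h1.2, h2.1, h2.2]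

end bounds

end RegCantorSet
namespace RegCantorSet

variable {C : RegCantorSet}

theorem dg_same_sign {i j : Fin C.k} (h : C.trans i j) {x y : ℝ}
    (hx : x ∈ Icc (C.u i j) (C.v i j)) (hy : y ∈ Icc (C.u i j) (C.v i j)) :
    0 < deriv C.g x * deriv C.g y := by
  have hp : (deriv C.g '' Icc (C.u i j) (C.v i j)).OrdConnected :=
    (isPreconnected_Icc.image _ continuous_dg.continuousOn).ordConnected
  have h0 : (0 : ℝ) ∉ deriv C.g '' Icc (C.u i j) (C.v i j) := by
    rintro ⟨w, hw, e⟩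
    exact dg_ne h hw e
  have h1 := mem_image_of_mem (deriv C.g) hx
  have h2 := mem_image_of_mem (deriv C.g) hy
  rcases lt_or_gt_of_ne (dg_ne h hx) with hx0 | hx0 <;>
    rcases lt_or_gt_of_ne (dg_ne h hy) with hy0 | hy0
  · exact mul_pos_of_neg_of_neg hx0 hy0
  · exact absurd (hp.out h1 h2 ⟨hx0.le, hy0.le⟩) h0
  · exact absurd (hp.out h2 h1 ⟨hy0.le, hx0.le⟩) h0
  · exact mul_pos hx0 hy0

theorem inv_eq_mul_exp {x y : ℝ} (h : 0 < x * y) :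
    y⁻¹ = x⁻¹ * Real.exp (Real.log x - Real.log y) := by
  have hx : x ≠ 0 := left_ne_zero_of_mul h.ne'
  have hy : y ≠ 0 := right_ne_zero_of_mul h.ne'
  rw [← Real.log_div hx hy, Real.exp_log]
  · field_simp
  · have : x / y = (x * y) / (y * y) := by field_simp
    rw [this]
    exact div_pos h (mul_self_pos.2 hy)

variable (C) in
/-- The derivative of the composed inverse branch at the left endpoint. -/
def Pder (θ : ℕ → Fin C.k) (n : ℕ) : ℝ :=
  ∏ m ∈ Finset.range n, (deriv C.g (C.fword θ (m + 1) (C.a (θ 0))))⁻¹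

theorem Pder_ne {θ : ℕ → Fin C.k} {n : ℕ} (h : C.Adm θ n) : C.Pder θ n ≠ 0 := by
  refine Finset.prod_ne_zero_iff.2 fun m hm => inv_ne_zero ?_
  have hm' := Finset.mem_range.1 hm
  exact dg_ne (h m hm') (fword_branch (h.mono hm') (left_mem _))

theorem fword_deriv' {θ : ℕ → Fin C.k} {n : ℕ} (h : C.Adm θ n) {s : ℝ}
    (hs : s ∈ Icc (C.a (θ 0)) (C.b (θ 0))) :
    HasDerivWithinAt (C.fword θ n) (C.Pder θ n * Real.exp (C.psi θ n s))
      (Icc (C.a (θ 0)) (C.b (θ 0))) s := by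
  have e : C.Pder θ n * Real.exp (C.psi θ n s) =
      ∏ m ∈ Finset.range n, (deriv C.g (C.fword θ (m + 1) s))⁻¹ := by
    unfold Pder psi
    rw [Real.exp_sum, ← Finset.prod_mul_distrib]
    refine Finset.prod_congr rfl fun m hm => ?_
    have hm' := Finset.mem_range.1 hm
    rw [dterm, clamp_eq hs]
    exact (inv_eq_mul_exp (dg_same_sign (h m hm') (fword_branch (h.mono hm') (left_mem _))
      (fword_branch (h.mono hm') hs))).symm
  rw [e]
  exact fword_deriv h hs

theorem fword_eq {θ : ℕ → Fin C.k} {n : ℕ} (h : C.Adm θ n) {s : ℝ}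
    (hs : s ∈ Icc (C.a (θ 0)) (C.b (θ 0))) :
    C.fword θ n s = C.fword θ n (C.a (θ 0)) +
      C.Pder θ n * ∫ x in (C.a (θ 0))..s, Real.exp (C.psi θ n x) := by
  have hc := psi_continuous h
  have := (convex_Icc (C.a (θ 0)) (C.b (θ 0))).norm_image_sub_le_of_norm_hasDerivWithin_le
    (f := fun y => C.fword θ n y - C.Pder θ n * ∫ x in (C.a (θ 0))..y, Real.exp (C.psi θ n x))
    (C := 0)
    (fun x hx => (fword_deriv' h hx).sub
      (((cont_exp hc).integral_hasStrictDerivAt (C.a (θ 0)) x).hasDerivAt.const_mul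
        (C.Pder θ n)).hasDerivWithinAt)
    (fun x _ => by simp) (left_mem (θ 0)) hs
  simp only [intervalIntegral.integral_same, mul_zero, sub_zero, zero_mul,
    norm_le_zero_iff] at this
  linarith

variable (C) in
/-- The signed scale of the composed inverse branch. -/
def Lsc (θ : ℕ → Fin C.k) (n : ℕ) : ℝ :=
  C.Pder θ n * (∫ x in (C.a (θ 0))..(C.b (θ 0)), Real.exp (C.psi θ n x)) /
    (C.b (θ 0) - C.a (θ 0))

theorem Lsc_ne {θ : ℕ → Fin C.k} {n : ℕ} (h : C.Adm θ n) : C.Lsc θ n ≠ 0 :=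
  div_ne_zero (mul_ne_zero (Pder_ne h) (int_pos (C.hab _) (psi_continuous h)).ne')
    (sub_pos.2 (C.hab _)).ne'

variable (C) in
/-- The normalized composed inverse branch, extended to the line. -/
def kap (θ : ℕ → Fin C.k) (n : ℕ) : ℝ → ℝ := Nrm (C.a (θ 0)) (C.b (θ 0)) (C.psi θ n)

theorem fword_eq_kap {θ : ℕ → Fin C.k} {n : ℕ} (h : C.Adm θ n) {s : ℝ}
    (hs : s ∈ Icc (C.a (θ 0)) (C.b (θ 0))) :
    C.fword θ n s = C.fword θ n (C.a (θ 0)) - C.Lsc θ n * C.a (θ 0) +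
      C.Lsc θ n * C.kap θ n s := by
  rw [fword_eq h hs, Lsc, kap, Nrm]
  have h1 := (int_pos (C.hab (θ 0)) (psi_continuous h)).ne'
  have h2 := (sub_pos.2 (C.hab (θ 0))).ne'
  generalize (∫ x in (C.a (θ 0))..(C.b (θ 0)), Real.exp (C.psi θ n x)) = J at *
  generalize (∫ x in (C.a (θ 0))..s, Real.exp (C.psi θ n x)) = J' at *
  field_simp
  ring

theorem int_mono {θ : ℕ → Fin C.k} {n : ℕ} (h : C.Adm θ n) {s t : ℝ} (hst : s ≤ t) :
    ∫ x in (C.a (θ 0))..s, Real.exp (C.psi θ n x) ≤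
      ∫ x in (C.a (θ 0))..t, Real.exp (C.psi θ n x) := by
  have hc := cont_exp (psi_continuous h)
  have h1 := intervalIntegral.integral_add_adjacent_intervals
    (hc.intervalIntegrable (μ := volume) (C.a (θ 0)) s) (hc.intervalIntegrable s t)
  have h2 : 0 ≤ ∫ x in s..t, Real.exp (C.psi θ n x) :=
    intervalIntegral.integral_nonneg hst (fun x _ => (Real.exp_pos _).le)
  linarith

theorem approx_eq {θ : ℕ → Fin C.k} {n : ℕ} (h : C.Adm θ n) {s : ℝ}
    (hs : s ∈ Icc (C.a (θ 0)) (C.b (θ 0))) :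
    C.limGeomApprox θ n s = C.kap θ n s := by
  have hJ := int_pos (C.hab (θ 0)) (psi_continuous h)
  have hab := (C.hab (θ 0)).le
  have ha := left_mem (θ 0)
  have hb : C.b (θ 0) ∈ Icc (C.a (θ 0)) (C.b (θ 0)) := right_mem_Icc.2 hab
  have hPne := Pder_ne h
  have hF : ∀ x ∈ Icc (C.a (θ 0)) (C.b (θ 0)), ∀ y ∈ Icc (C.a (θ 0)) (C.b (θ 0)), x ≤ y →
      (0 < C.Pder θ n → C.fword θ n x ≤ C.fword θ n y) ∧
      (C.Pder θ n < 0 → C.fword θ n y ≤ C.fword θ n x) := by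
    intro x hx y hy hxy
    rw [fword_eq h hx, fword_eq h hy]
    have := int_mono h hxy
    exact ⟨fun hP => by gcongr, fun hP =>
      add_le_add_right (mul_le_mul_of_nonpos_left this hP.le) _⟩
  have hFs := fword_eq h hs
  have hFb := fword_eq h hb
  have hcalc : C.kap θ n s = C.a (θ 0) + (C.fword θ n s - C.fword θ n (C.a (θ 0))) *
      (C.b (θ 0) - C.a (θ 0)) / (C.fword θ n (C.b (θ 0)) - C.fword θ n (C.a (θ 0))) := by
    rw [hFs, hFb, kap, Nrm]
    simp only [add_sub_cancel_left]
    have := hJ.ne'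
    field_simp
  rcases lt_or_gt_of_ne hPne with hP | hP
  · have hn : ¬ MonotoneOn (C.fword θ n) (Icc (C.a (θ 0)) (C.b (θ 0))) := by
      intro hm
      have := hm ha hb hab
      rw [hFb] at this
      have := mul_neg_of_neg_of_pos hP hJ
      linarith
    have hi : sInf (C.fword θ n '' Icc (C.a (θ 0)) (C.b (θ 0))) = C.fword θ n (C.b (θ 0)) :=
      IsLeast.csInf_eq ⟨mem_image_of_mem _ hb, by
        rintro _ ⟨x, hx, rfl⟩; exact (hF x hx _ hb hx.2).2 hP⟩
    have hS : sSup (C.fword θ n '' Icc (C.a (θ 0)) (C.b (θ 0))) = C.fword θ n (C.a (θ 0)) :=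
      IsGreatest.csSup_eq ⟨mem_image_of_mem _ ha, by
        rintro _ ⟨x, hx, rfl⟩; exact (hF _ ha x hx hx.1).2 hP⟩
    simp only [limGeomApprox, if_neg hn, hi, hS]
    rw [hcalc, ← neg_sub (C.fword θ n s), ← neg_sub (C.fword θ n (C.b (θ 0))), neg_mul,
      neg_div_neg_eq]
  · have hn : MonotoneOn (C.fword θ n) (Icc (C.a (θ 0)) (C.b (θ 0))) :=
      fun x hx y hy hxy => (hF x hx y hy hxy).1 hP
    have hi : sInf (C.fword θ n '' Icc (C.a (θ 0)) (C.b (θ 0))) = C.fword θ n (C.a (θ 0)) :=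
      IsLeast.csInf_eq ⟨mem_image_of_mem _ ha, by
        rintro _ ⟨x, hx, rfl⟩; exact (hF _ ha x hx hx.1).1 hP⟩
    have hS : sSup (C.fword θ n '' Icc (C.a (θ 0)) (C.b (θ 0))) = C.fword θ n (C.b (θ 0)) :=
      IsGreatest.csSup_eq ⟨mem_image_of_mem _ hb, by
        rintro _ ⟨x, hx, rfl⟩; exact (hF x hx _ hb hx.2).1 hP⟩
    simp only [limGeomApprox, if_pos hn, hi, hS]
    rw [hcalc]

/-- Uniform `C¹` convergence to the limit geometry. -/
theorem limGeom_close {θ : ℕ → Fin C.k} (h : C.LeftAdmissible θ) :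
    ∃ M : ℝ, (∀ s ∈ Icc (C.a (θ 0)) (C.b (θ 0)),
      |derivWithin (C.limGeom θ) (Icc (C.a (θ 0)) (C.b (θ 0))) s| ≤ M ∧
      DifferentiableWithinAt ℝ (C.limGeom θ) (Icc (C.a (θ 0)) (C.b (θ 0))) s ∧
      C.limGeom θ s ∈ Icc (C.a (θ 0)) (C.b (θ 0))) ∧
    ∀ ε > 0, ∃ N, ∀ n ≥ N, ∀ θ' : ℕ → Fin C.k, C.Adm θ' n → (∀ j ≤ N, θ' j = θ j) →
      ∀ s ∈ Icc (C.a (θ 0)) (C.b (θ 0)), |C.kap θ' n s - C.limGeom θ s| ≤ ε ∧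
        |deriv (C.kap θ' n) s -
          derivWithin (C.limGeom θ) (Icc (C.a (θ 0)) (C.b (θ 0))) s| ≤ ε := by
  obtain ⟨B, ρ, hB, hρ0, hρ1, hb⟩ := C.exists_dterm_bound
  set D := B * (1 - ρ)⁻¹ with hD
  have hab := C.hab (θ 0)
  have hcI := psiInf_continuous hB hρ0 hρ1 hb h
  have hbI := psiInf_bound hB hρ0 hρ1 hb h
  set I := Icc (C.a (θ 0)) (C.b (θ 0)) with hI
  set W := 1 + (C.b (θ 0) - C.a (θ 0)) with hW
  have hW1 : 1 ≤ W := by linarith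
  have hW2 : C.b (θ 0) - C.a (θ 0) ≤ W := by linarith
  -- smallness of the error
  have hsm : ∀ ε > 0, ∃ N : ℕ,
      (Real.exp (2 * (2 * (B * ρ ^ N * (1 - ρ)⁻¹))) - 1) * Real.exp (2 * D) * W < ε := by
    intro ε hε
    have h1 : Tendsto (fun N : ℕ => (Real.exp (2 * (2 * (B * ρ ^ N * (1 - ρ)⁻¹))) - 1) *
        Real.exp (2 * D) * W) atTop
        (𝓝 ((Real.exp (2 * (2 * (B * 0 * (1 - ρ)⁻¹))) - 1) * Real.exp (2 * D) * W)) := by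
      have h0 := tendsto_pow_atTop_nhds_zero_of_lt_one hρ0.le hρ1
      refine Tendsto.mul_const _ (Tendsto.mul_const _ (Tendsto.sub_const ?_ _))
      refine (Real.continuous_exp.tendsto _).comp ?_
      exact (((h0.const_mul B).mul_const _).const_mul 2).const_mul 2
    simp only [mul_zero, zero_mul, Real.exp_zero, sub_self] at h1
    exact (h1.eventually_lt_const hε).exists
  have hN : ∀ ε > 0, ∃ N, ∀ n ≥ N, ∀ θ' : ℕ → Fin C.k, C.Adm θ' n → (∀ j ≤ N, θ' j = θ j) →
      ∀ s ∈ I, |C.kap θ' n s - Nrm (C.a (θ 0)) (C.b (θ 0)) (C.psiInf θ) s| ≤ ε ∧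
        |deriv (C.kap θ' n) s - deriv (Nrm (C.a (θ 0)) (C.b (θ 0)) (C.psiInf θ)) s| ≤ ε := by
    intro ε hε
    obtain ⟨N, hN⟩ := hsm ε hε
    refine ⟨N, fun n hn θ' hθ' he s hs => ?_⟩
    have hk : C.kap θ' n = Nrm (C.a (θ 0)) (C.b (θ 0)) (C.psi θ' n) := by
      rw [kap, he 0 (Nat.zero_le _)]
    have hc1 := psi_continuous hθ'
    have hb1 := psi_bound hB hρ0 hρ1 hb hθ'
    have hcl := psi_psiInf hB hρ0 hρ1 hb h hθ' hn he
    have hδ0 : 0 ≤ 2 * (B * ρ ^ N * (1 - ρ)⁻¹) := (abs_nonneg _).trans (hcl 0)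
    have hE : 0 ≤ Real.exp (2 * (2 * (B * ρ ^ N * (1 - ρ)⁻¹))) - 1 :=
      sub_nonneg.2 (Real.one_le_exp (by linarith))
    have hX : 0 ≤ (Real.exp (2 * (2 * (B * ρ ^ N * (1 - ρ)⁻¹))) - 1) * Real.exp (2 * D) := by
      positivity
    rw [hk, (Nrm_hasDerivAt hc1 s).deriv, (Nrm_hasDerivAt hcI s).deriv]
    constructor
    · exact (Nrm_close hab hc1 hcI hb1 hbI hcl hs).trans
        ((mul_le_mul_of_nonneg_left hW2 hX).trans hN.le)
    · exact (Nrm_deriv_close hab hc1 hcI hb1 hbI hcl s).trans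
        ((le_mul_of_one_le_right hX hW1).trans hN.le)
  have hlim : ∀ s ∈ I, C.limGeom θ s = Nrm (C.a (θ 0)) (C.b (θ 0)) (C.psiInf θ) s := by
    intro s hs
    refine Tendsto.limUnder_eq ?_
    rw [Metric.tendsto_atTop]
    intro ε hε
    obtain ⟨N, hN⟩ := hN (ε / 2) (by positivity)
    refine ⟨N, fun n hn => ?_⟩
    rw [approx_eq (h.adm n) hs, Real.dist_eq]
    exact ((hN n hn θ (h.adm n) (fun _ _ => rfl) s hs).1).trans_lt (by linarith)
  have hder : ∀ s ∈ I, HasDerivWithinAt (C.limGeom θ)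
      (deriv (Nrm (C.a (θ 0)) (C.b (θ 0)) (C.psiInf θ)) s) I s := by
    intro s hs
    have := (Nrm_hasDerivAt (a := C.a (θ 0)) (b := C.b (θ 0)) hcI s).hasDerivWithinAt (s := I)
    rw [(Nrm_hasDerivAt hcI s).deriv]
    exact this.congr hlim (hlim s hs)
  have hdw : ∀ s ∈ I, derivWithin (C.limGeom θ) I s =
      deriv (Nrm (C.a (θ 0)) (C.b (θ 0)) (C.psiInf θ)) s :=
    fun s hs => (hder s hs).derivWithin (uniqueDiffOn_Icc hab s hs)
  refine ⟨Real.exp (2 * D), fun s hs => ⟨?_, (hder s hs).differentiableWithinAt, ?_⟩, ?_⟩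
  · rw [hdw s hs, (Nrm_hasDerivAt hcI s).deriv, abs_of_nonneg (Nrm_deriv_nonneg hab hcI s)]
    exact Nrm_deriv_le hab hcI hbI s
  · rw [hlim s hs]; exact Nrm_mem hab hcI hs
  · intro ε hε
    obtain ⟨N, hN⟩ := hN ε hε
    refine ⟨N, fun n hn θ' hθ' he s hs => ?_⟩
    rw [hlim s hs, hdw s hs]
    exact hN n hn θ' hθ' he s hs

end RegCantorSet
namespace RegCantorSet

variable {C : RegCantorSet}

theorem exists_dg_bound (C : RegCantorSet) :
    ∃ Λ : ℝ, 0 < Λ ∧ ∀ x ∈ C.domain, |deriv C.g x| ≤ Λ := by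
  obtain ⟨M, hM⟩ := isCompact_domain.exists_bound_of_continuousOn
    (continuous_dg (C := C)).continuousOn
  exact ⟨max M 1, by positivity, fun x hx => (hM x hx).trans (le_max_left _ _)⟩

theorem finv_lower {Λ : ℝ} (hd : ∀ x ∈ C.domain, |deriv C.g x| ≤ Λ)
    {i j : Fin C.k} (h : C.trans i j) {s t : ℝ} (hs : s ∈ Icc (C.a j) (C.b j))
    (ht : t ∈ Icc (C.a j) (C.b j)) :
    |s - t| ≤ Λ * |C.finv i j s - C.finv i j t| := by
  have := (convex_Icc (C.u i j) (C.v i j)).norm_image_sub_le_of_norm_deriv_le (f := C.g)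
    (C := Λ) (fun x _ => (C.smooth.differentiable one_ne_zero) x)
    (fun x hx => hd x (mem_domain h hx)) (finv_mem h ht) (finv_mem h hs)
  rwa [g_finv h hs, g_finv h ht] at this

theorem fword_sub {θ : ℕ → Fin C.k} {n : ℕ} (h : C.Adm θ n) {s t : ℝ}
    (hs : s ∈ Icc (C.a (θ 0)) (C.b (θ 0))) (ht : t ∈ Icc (C.a (θ 0)) (C.b (θ 0))) :
    C.fword θ n t - C.fword θ n s = C.Pder θ n * ∫ x in s..t, Real.exp (C.psi θ n x) := by
  have hc := cont_exp (psi_continuous h)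
  have h1 := intervalIntegral.integral_add_adjacent_intervals
    (hc.intervalIntegrable (μ := volume) (C.a (θ 0)) s) (hc.intervalIntegrable s t)
  rw [fword_eq h hs, fword_eq h ht, ← h1]
  ring

theorem fword_lower {D : ℝ} {θ : ℕ → Fin C.k} {n : ℕ} (h : C.Adm θ n)
    (hD : ∀ x, |C.psi θ n x| ≤ D) {s t : ℝ}
    (hs : s ∈ Icc (C.a (θ 0)) (C.b (θ 0))) (ht : t ∈ Icc (C.a (θ 0)) (C.b (θ 0))) :
    |C.Pder θ n| * Real.exp (-D) * |s - t| ≤ |C.fword θ n s - C.fword θ n t| := by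
  wlog hst : s ≤ t generalizing s t
  · rw [abs_sub_comm, abs_sub_comm (C.fword θ n s)]
    exact this ht hs (le_of_not_ge hst)
  rw [abs_sub_comm, abs_sub_comm (C.fword θ n s), fword_sub h hs ht, abs_mul, mul_assoc]
  refine mul_le_mul_of_nonneg_left ?_ (abs_nonneg _)
  rw [abs_of_nonneg (sub_nonneg.2 hst)]
  exact (int_lower hst (psi_continuous h) hD).trans (le_abs_self _)

theorem Lsc_upper {D : ℝ} {θ : ℕ → Fin C.k} {n : ℕ} (h : C.Adm θ n)
    (hD : ∀ x, |C.psi θ n x| ≤ D) : |C.Lsc θ n| ≤ |C.Pder θ n| * Real.exp D := by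
  have hba := sub_pos.2 (C.hab (θ 0))
  have hJ := int_pos (C.hab (θ 0)) (psi_continuous h)
  rw [Lsc, abs_div, abs_mul, abs_of_pos hba, abs_of_pos hJ, div_le_iff₀ hba, mul_assoc]
  exact mul_le_mul_of_nonneg_left (int_upper (C.hab (θ 0)).le (psi_continuous h) hD)
    (abs_nonneg _)

theorem Lsc_eq {θ : ℕ → Fin C.k} {n : ℕ} (h : C.Adm θ n) :
    |C.Lsc θ n| * (C.b (θ 0) - C.a (θ 0)) =
      |C.fword θ n (C.b (θ 0)) - C.fword θ n (C.a (θ 0))| := by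
  have hba := sub_pos.2 (C.hab (θ 0))
  rw [fword_sub h (left_mem _) (right_mem_Icc.2 (C.hab _).le), Lsc, abs_div, abs_of_pos hba,
    div_mul_cancel₀ _ hba.ne']

theorem renorm (C : RegCantorSet) (x₀ : ℝ) (hx₀ : x₀ ∈ C.K) :
    ∃ (i : ℕ → Fin C.k) (A L : ℕ → ℝ) (κ : ℕ → ℝ → ℝ) (c : ℝ), 0 < c ∧
      (∀ n, ContDiff ℝ 1 (κ n)) ∧
      (∀ n, ∀ s ∈ Icc (C.a (i n)) (C.b (i n)), κ n s ∈ Icc (C.a (i n)) (C.b (i n))) ∧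
      (∀ n, ∀ s ∈ C.K ∩ Icc (C.a (i n)) (C.b (i n)), A n + L n * κ n s ∈ C.K) ∧
      (∀ n, ∃ s ∈ Icc (C.a (i n)) (C.b (i n)), A n + L n * κ n s = x₀) ∧
      (∀ n, L n ≠ 0) ∧ Tendsto L atTop (𝓝 0) ∧ (∀ n, c * |L n| ≤ |L (n + 1)|) ∧
      (∀ 𝓤 : Ultrafilter ℕ, (𝓤 : Filter ℕ) ≤ atTop → ∃ θ : ℕ → Fin C.k, C.LeftAdmissible θ ∧
        (∀ᶠ n in (𝓤 : Filter ℕ), i n = θ 0) ∧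
        (∀ ε > 0, ∀ᶠ n in (𝓤 : Filter ℕ), ∀ s ∈ Icc (C.a (θ 0)) (C.b (θ 0)),
          |κ n s - C.limGeom θ s| ≤ ε ∧
          |deriv (κ n) s -
            derivWithin (C.limGeom θ) (Icc (C.a (θ 0)) (C.b (θ 0))) s| ≤ ε)) := by
  have hx : ∀ n, ∃ i j, C.trans i j ∧ C.g^[n] x₀ ∈ Icc (C.u i j) (C.v i j) := by
    intro n
    have := hx₀ n
    simp only [domain, mem_iUnion] at this
    obtain ⟨i, j, h, h'⟩ := this
    exact ⟨i, j, h, h'⟩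
  choose i j hij hmem using hx
  have hji : ∀ n, j n = i (n + 1) := by
    intro n
    by_contra hne
    have h1 := g_mem (hij n) (hmem n)
    rw [← Function.iterate_succ_apply' C.g n x₀] at h1
    have h2 := branch_subset (hij (n + 1)) (hmem (n + 1))
    exact (Set.disjoint_left.1 (C.disj _ _ hne)) h1 h2
  simp only [hji] at hij hmem
  set w : ℕ → ℕ → Fin C.k := fun n m => i (n - m) with hw
  have hadm : ∀ n, C.Adm (w n) n := by
    intro n m hm
    have := hij (n - (m + 1))
    rwa [show n - (m + 1) + 1 = n - m by omega] at this
  have hshift : ∀ n, (fun m => w (n + 1) (m + 1)) = w n := by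
    intro n
    funext m
    simp only [hw, Nat.add_sub_add_right]
  have hw0 : ∀ n, w n 0 = i n := fun n => rfl
  have hw1 : ∀ n, w (n + 1) 1 = i n := fun n => rfl
  have hstep : ∀ n, C.fword (w (n + 1)) (n + 1) =
      C.fword (w n) n ∘ C.finv (i n) (i (n + 1)) := by
    intro n
    rw [fword_shift, hshift, hw0, hw1]
  have horb : ∀ n, C.g^[n] x₀ ∈ Icc (C.a (i n)) (C.b (i n)) := fun n =>
    branch_subset (hij n) (hmem n)
  have hback : ∀ n, C.fword (w n) n (C.g^[n] x₀) = x₀ := by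
    intro n
    induction n with
    | zero => rfl
    | succ n ih =>
      rw [hstep, Function.iterate_succ_apply', Function.comp, finv_g (hij n) (hmem n)]
      exact ih
  obtain ⟨B, ρ, hB, hρ0, hρ1, hb⟩ := C.exists_dterm_bound
  obtain ⟨Λ, hΛ, hΛd⟩ := C.exists_dg_bound
  obtain ⟨l, hl, hd⟩ := C.exists_lam
  set D := B * (1 - ρ)⁻¹ with hD
  have hbd : ∀ n x, |C.psi (w n) n x| ≤ D := fun n x => psi_bound hB hρ0 hρ1 hb (hadm n) x
  refine ⟨i, fun n => C.fword (w n) n (C.a (i n)) - C.Lsc (w n) n * C.a (i n),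
    fun n => C.Lsc (w n) n, fun n => C.kap (w n) n, Real.exp (-D) * Real.exp (-D) * Λ⁻¹,
    by positivity, fun n => Nrm_contDiff (psi_continuous (hadm n)),
    fun n s hs => Nrm_mem (C.hab _) (psi_continuous (hadm n)) hs, ?_, ?_,
    fun n => Lsc_ne (hadm n), ?_, ?_, ?_⟩
  · rintro n s ⟨hsK, hs⟩
    have := fword_eq_kap (hadm n) (s := s) hs
    have h2 := fword_K (hadm n) (s := s) hs hsK
    rw [this] at h2
    exact h2
  · intro n
    refine ⟨C.g^[n] x₀, horb n, ?_⟩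
    have := fword_eq_kap (hadm n) (s := C.g^[n] x₀) (horb n)
    rw [hback] at this
    exact this.symm
  · have hle : ∀ n, |C.Lsc (w n) n| ≤ l⁻¹ ^ n := by
      intro n
      have hba := sub_pos.2 (C.hab (i n))
      have h1 := Lsc_eq (hadm n)
      have h2 := fword_lip hl hd (hadm n) (right_mem_Icc.2 (C.hab (w n 0)).le)
        (left_mem (w n 0))
      rw [← h1, hw0, abs_of_pos hba] at h2
      exact le_of_mul_le_mul_right h2 hba
    exact squeeze_zero_norm hle (tendsto_pow_atTop_nhds_zero_of_lt_one (by positivity)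
      (inv_lt_one_of_one_lt₀ hl))
  · intro n
    have hba := sub_pos.2 (C.hab (i (n + 1)))
    have h1 := Lsc_eq (hadm (n + 1))
    have hr : C.b (i (n + 1)) ∈ Icc (C.a (i (n + 1))) (C.b (i (n + 1))) :=
      right_mem_Icc.2 (C.hab _).le
    have hl' := left_mem (C := C) (i (n + 1))
    rw [hstep, hw0] at h1
    have h2 := fword_lower (hadm n) (hbd n)
      (branch_subset (hij n) (finv_mem (hij n) hr)) (branch_subset (hij n) (finv_mem (hij n) hl'))
    have h3 := finv_lower hΛd (hij n) hr hl'
    have h4 := Lsc_upper (hadm n) (hbd n)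
    rw [abs_of_pos hba] at h3
    simp only [Function.comp] at h1
    rw [← h1] at h2
    refine le_of_mul_le_mul_right (le_trans ?_ h2) hba
    calc Real.exp (-D) * Real.exp (-D) * Λ⁻¹ * |C.Lsc (w n) n| *
          (C.b (i (n + 1)) - C.a (i (n + 1)))
        ≤ Real.exp (-D) * Real.exp (-D) * Λ⁻¹ * (|C.Pder (w n) n| * Real.exp D) *
          (Λ * |C.finv (i n) (i (n + 1)) (C.b (i (n + 1))) -
            C.finv (i n) (i (n + 1)) (C.a (i (n + 1)))|) := by gcongr
      _ = (Real.exp (-D) * Real.exp D) * (Λ⁻¹ * Λ) * (|C.Pder (w n) n| * Real.exp (-D) *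
          |C.finv (i n) (i (n + 1)) (C.b (i (n + 1))) -
            C.finv (i n) (i (n + 1)) (C.a (i (n + 1)))|) := by ring
      _ = _ := by
        rw [← Real.exp_add, inv_mul_cancel₀ hΛ.ne']
        simp
  · intro 𝓤 h𝓤
    have hlet : ∀ m, ∃ a : Fin C.k, ∀ᶠ n in (𝓤 : Filter ℕ), w n m = a := by
      intro m
      have := Ultrafilter.eventually_exists_iff (f := 𝓤) (P := fun (a : Fin C.k) n => w n m = a)
      exact this.1 (Eventually.of_forall fun n => ⟨_, rfl⟩)
    choose θ hθ using hlet
    have hadmθ : C.LeftAdmissible θ := by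
      intro m
      obtain ⟨n, h1, h2, h3⟩ :=
        ((hθ m).and ((hθ (m + 1)).and (h𝓤 (eventually_gt_atTop m)))).exists
      have := hadm n m h3
      rwa [h1, h2] at this
    refine ⟨θ, hadmθ, hθ 0, fun ε hε => ?_⟩
    obtain ⟨M, -, hcl⟩ := limGeom_close hadmθ
    obtain ⟨N, hN⟩ := hcl ε hε
    have hall : ∀ᶠ n in (𝓤 : Filter ℕ), ∀ m ∈ Finset.range (N + 1), w n m = θ m :=
      (Filter.eventually_all_finset _).2 fun m _ => hθ m
    filter_upwards [hall, h𝓤 (eventually_ge_atTop N)] with n h1 h2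
    exact hN n h2 (w n) (hadm n) (fun m hm => h1 m (Finset.mem_range.2 (by omega)))

end RegCantorSet
/-- Local solution `y = φ c x` of `f (x, y) = c`. -/
theorem implicit_solution (f : ℝ × ℝ → ℝ) (z : ℝ × ℝ) (hf : ContDiffAt ℝ 1 f z)
    (hdx : fderiv ℝ f z (1, 0) ≠ 0) (hdy : fderiv ℝ f z (0, 1) ≠ 0) :
    ∃ (φ : ℝ → ℝ → ℝ) (α : ℝ), α ≠ 0 ∧ (∀ᶠ y in 𝓝 z.2, φ (f (z.1, y)) z.1 = y) ∧
      ∀ η > 0, ∃ δ > 0, ∀ c, |c - f z| < δ → ContinuousAt (fun c => φ c z.1) c ∧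
        ∀ x, |x - z.1| < δ → f (x, φ c x) = c ∧ ContDiffAt ℝ 1 (φ c) x ∧
          |deriv (φ c) x - α| ≤ η := by
  set p := fderiv ℝ f z (1, 0) with hp
  set q := fderiv ℝ f z (0, 1) with hq
  let f₁ : ℝ × ℝ →L[ℝ] ℝ × ℝ := (ContinuousLinearMap.fst ℝ ℝ ℝ).prod (fderiv ℝ f z)
  let f₂ : ℝ × ℝ →L[ℝ] ℝ × ℝ := (ContinuousLinearMap.fst ℝ ℝ ℝ).prod
    (q⁻¹ • (ContinuousLinearMap.snd ℝ ℝ ℝ - p • ContinuousLinearMap.fst ℝ ℝ ℝ))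
  have hfd : ∀ v : ℝ × ℝ, fderiv ℝ f z v = p * v.1 + q * v.2 := by
    intro v
    have : v = v.1 • ((1, 0) : ℝ × ℝ) + v.2 • ((0, 1) : ℝ × ℝ) := by
      ext <;> simp
    conv_lhs => rw [this, map_add, map_smul, map_smul]
    simp only [smul_eq_mul, ← hp, ← hq]
    ring
  let e : (ℝ × ℝ) ≃L[ℝ] (ℝ × ℝ) := ContinuousLinearEquiv.equivOfInverse f₁ f₂
    (by
      intro v
      ext
      · simp [f₁, f₂]
      · simp [f₁, f₂, hfd]
        field_simp)
    (by
      intro v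
      ext
      · simp [f₁, f₂]
      · simp [f₁, f₂, hfd]
        field_simp
        ring)
  let G : ℝ × ℝ → ℝ × ℝ := fun v => (v.1, f v)
  have hG : ContDiffAt ℝ 1 G z := contDiffAt_fst.prodMk hf
  have hG' : HasFDerivAt G (e : (ℝ × ℝ) →L[ℝ] (ℝ × ℝ)) z :=
    hasFDerivAt_fst.prodMk (hf.differentiableAt one_ne_zero).hasFDerivAt
  have hst : HasStrictFDerivAt G (e : (ℝ × ℝ) →L[ℝ] (ℝ × ℝ)) z :=
    hG.hasStrictFDerivAt' hG' one_ne_zero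
  let Ψ : ℝ × ℝ → ℝ × ℝ := hst.localInverse G e z
  have hΨ : ContDiffAt ℝ 1 Ψ (z.1, f z) := hG.to_localInverse hG' one_ne_zero
  have hΨ' : HasStrictFDerivAt Ψ (e.symm : (ℝ × ℝ) →L[ℝ] (ℝ × ℝ)) (z.1, f z) :=
    hst.to_localInverse
  have hfΨ : fderiv ℝ Ψ (z.1, f z) = (e.symm : (ℝ × ℝ) →L[ℝ] (ℝ × ℝ)) := hΨ'.hasFDerivAt.fderiv
  have hright : ∀ᶠ w in 𝓝 (z.1, f z), G (Ψ w) = w := hst.eventually_right_inverse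
  have hleft : ∀ᶠ w in 𝓝 z, Ψ (G w) = w := hst.eventually_left_inverse
  refine ⟨fun c x => (Ψ (x, c)).2, -p / q, div_ne_zero (neg_ne_zero.2 hdx) hdy, ?_, ?_⟩
  · have ht : Tendsto (fun y : ℝ => (z.1, y)) (𝓝 z.2) (𝓝 z) := by
      have : Continuous (fun y : ℝ => (z.1, y)) := by fun_prop
      exact this.tendsto z.2
    filter_upwards [ht.eventually hleft] with y hy
    exact congrArg Prod.snd hy
  · intro η hη
    have hcf : ContinuousAt (fun w => (fderiv ℝ Ψ w (1, 0)).2) (z.1, f z) := by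
      have h1 : ContinuousAt (fderiv ℝ Ψ) (z.1, f z) :=
        (hΨ.fderiv_right (m := 0) (by norm_num)).continuousAt
      exact continuous_snd.continuousAt.comp (h1.clm_apply continuousAt_const)
    have hval : (fderiv ℝ Ψ (z.1, f z) (1, 0)).2 = -p / q := by
      rw [hfΨ]
      change (f₂ (1, 0)).2 = _
      simp [f₂]
      ring
    have hev : ∀ᶠ w in 𝓝 (z.1, f z), |(fderiv ℝ Ψ w (1, 0)).2 - (-p / q)| ≤ η := by
      have := hcf.tendsto
      rw [hval] at this
      filter_upwards [Metric.tendsto_nhds.1 this η hη] with w hw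
      exact hw.le
    have hcd : ∀ᶠ w in 𝓝 (z.1, f z), ContDiffAt ℝ 1 Ψ w := hΨ.eventually (by simp)
    obtain ⟨δ, hδ, hball⟩ := Metric.eventually_nhds_iff.1 (hright.and (hev.and hcd))
    refine ⟨δ, hδ, fun c hc => ?_⟩
    have hin : ∀ x, |x - z.1| < δ → dist (x, c) (z.1, f z) < δ := by
      intro x hx
      rw [Prod.dist_eq]
      exact max_lt hx hc
    refine ⟨?_, fun x hx => ?_⟩
    · have h1 := (hball (hin z.1 (by simpa using hδ))).2.2.continuousAt
      have h2 : ContinuousAt (fun c' : ℝ => (z.1, c')) c := by fun_prop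
      exact continuous_snd.continuousAt.comp
        (ContinuousAt.comp (f := fun c' : ℝ => (z.1, c')) (g := Ψ) h1 h2)
    · obtain ⟨h1, h2, h3⟩ := hball (hin x hx)
      have e1 : (Ψ (x, c)).1 = x := congrArg Prod.fst h1
      have e2 : f (Ψ (x, c)) = c := congrArg Prod.snd h1
      have hdp : HasFDerivAt (fun w => (Ψ w).2)
          ((ContinuousLinearMap.snd ℝ ℝ ℝ).comp (fderiv ℝ Ψ (x, c))) (x, c) :=
        (hasFDerivAt_snd (p := Ψ (x, c))).comp (x, c)
          (h3.differentiableAt one_ne_zero).hasFDerivAt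
      have hline : HasDerivAt (fun x' : ℝ => (x', c)) (1, 0) x :=
        (hasDerivAt_id x).prodMk (hasDerivAt_const x c)
      have hd := hdp.comp_hasDerivAt x hline
      refine ⟨?_, ?_, ?_⟩
      · have : (x, (Ψ (x, c)).2) = Ψ (x, c) := Prod.ext e1.symm rfl
        rw [this, e2]
      · have h5 : ContDiffAt ℝ 1 (fun x' : ℝ => (x', c)) x :=
          contDiffAt_id.prodMk contDiffAt_const
        exact contDiffAt_snd.comp x (ContDiffAt.comp (f := fun x' : ℝ => (x', c)) x h3 h5)
      · have : deriv (fun x' => (Ψ (x', c)).2) x = (fderiv ℝ Ψ (x, c) (1, 0)).2 := hd.deriv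
        rw [this]
        exact h2

/-- Matching the scales. -/
theorem match_scales {L L' : ℕ → ℝ} {c' : ℝ} (hc' : 0 < c') (hL : ∀ n, L n ≠ 0)
    (hL' : ∀ n, L' n ≠ 0) (hLt : Tendsto L atTop (𝓝 0)) (hLt' : Tendsto L' atTop (𝓝 0))
    (hcomp : ∀ n, c' * |L' n| ≤ |L' (n + 1)|) :
    ∃ m : ℕ → ℕ, Tendsto m atTop atTop ∧
      ∀ᶠ n in atTop, 1 ≤ |L n / L' (m n)| ∧ |L n / L' (m n)| ≤ c'⁻¹ := by
  have hex : ∀ n, ∃ m, |L' m| ≤ |L n| := by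
    intro n
    have h1 : Tendsto (fun m => |L' m|) atTop (𝓝 0) := by simpa using hLt'.abs
    obtain ⟨m, hm⟩ := (h1.eventually_lt_const (abs_pos.2 (hL n))).exists
    exact ⟨m, hm.le⟩
  have hL0 : Tendsto (fun m => |L m|) atTop (𝓝 0) := by simpa using hLt.abs
  have hsm : ∀ M : ℕ, ∀ᶠ n in atTop, M ≤ Nat.find (hex n) := by
    intro M
    have : ∀ᶠ n in atTop, ∀ j ∈ Finset.range M, |L n| < |L' j| :=
      (Filter.eventually_all_finset _).2 fun j _ => hL0.eventually_lt_const (abs_pos.2 (hL' j))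
    filter_upwards [this] with n hn
    rw [Nat.le_find_iff]
    intro j hj
    exact not_le.2 (hn j (Finset.mem_range.2 hj))
  refine ⟨fun n => Nat.find (hex n), tendsto_atTop.2 hsm, ?_⟩
  filter_upwards [hsm 1] with n hn
  have h1 := Nat.find_spec (hex n)
  have h2 := Nat.find_min (hex n) (m := Nat.find (hex n) - 1) (by omega)
  have h3 := hcomp (Nat.find (hex n) - 1)
  rw [Nat.sub_add_cancel hn] at h3
  have hp := abs_pos.2 (hL' (Nat.find (hex n)))
  rw [abs_div, le_div_iff₀ hp, div_le_iff₀ hp, one_mul]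
  refine ⟨h1, ?_⟩
  rw [inv_mul_eq_div, le_div_iff₀ hc', mul_comm]
  exact (mul_le_mul_of_nonneg_left (not_le.1 h2).le hc'.le).trans h3

theorem base_tendsto {C : RegCantorSet} {i : ℕ → Fin C.k} {A L : ℕ → ℝ} {κ : ℕ → ℝ → ℝ} {x₀ : ℝ}
    (hκ : ∀ n, ∀ s ∈ Icc (C.a (i n)) (C.b (i n)), κ n s ∈ Icc (C.a (i n)) (C.b (i n)))
    (hx : ∀ n, ∃ s ∈ Icc (C.a (i n)) (C.b (i n)), A n + L n * κ n s = x₀)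
    (hL : Tendsto L atTop (𝓝 0)) : Tendsto A atTop (𝓝 x₀) := by
  set S : ℝ := ∑ j, (|C.a j| + |C.b j|) with hS
  have hSi : ∀ j, |C.a j| + |C.b j| ≤ S := fun j =>
    Finset.single_le_sum (f := fun j => |C.a j| + |C.b j|) (fun j _ => by positivity)
      (Finset.mem_univ j)
  rw [tendsto_iff_norm_sub_tendsto_zero]
  have h1 : Tendsto (fun n => |L n| * S) atTop (𝓝 0) := by
    simpa using hL.abs.mul_const S
  refine squeeze_zero (fun n => norm_nonneg _) (fun n => ?_) h1
  obtain ⟨s, hs, e⟩ := hx n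
  have h2 := hκ n s hs
  have h3 : |κ n s| ≤ S := by
    refine le_trans ?_ (hSi (i n))
    rw [abs_le]
    constructor
    · linarith [h2.1, neg_abs_le (C.a (i n)), abs_nonneg (C.b (i n))]
    · linarith [h2.2, le_abs_self (C.b (i n)), abs_nonneg (C.a (i n))]
  have : A n - x₀ = - (L n * κ n s) := by linarith
  rw [this, Real.norm_eq_abs, abs_neg, abs_mul]
  gcongr

theorem step_close {a b : ℝ} (hab : a < b) {κ k ψ : ℝ → ℝ} {A L A' L' α ρ t R M η ε δ x₀ : ℝ}
    (hκ : ContDiff ℝ 1 κ) (hκm : ∀ s ∈ Icc a b, κ s ∈ Icc a b)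
    (hx : ∃ s ∈ Icc a b, A + L * κ s = x₀) (hL' : L' ≠ 0) (hLδ : |L| * (b - a) < δ)
    (hr : |L / L'| ≤ R) (hrρ : |L / L' - ρ| ≤ η)
    (hk : ∀ s ∈ Icc a b, |derivWithin k (Icc a b) s| ≤ M ∧
      DifferentiableWithinAt ℝ k (Icc a b) s ∧ k s ∈ Icc a b)
    (hκk : ∀ s ∈ Icc a b, |κ s - k s| ≤ η ∧ |deriv κ s - derivWithin k (Icc a b) s| ≤ η)
    (hψ : ∀ x, |x - x₀| < δ → ContDiffAt ℝ 1 ψ x ∧ |deriv ψ x - α| ≤ η)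
    (hy : |(ψ x₀ - A' + α * (A - x₀)) / L' - t| ≤ η) (hη0 : 0 ≤ η) (hη1 : η ≤ 1)
    (hηε : η * (R * (b - a) + 1 + |α| * (R + (|a| + |b|)) + R * (M + 1) + |α| * R + |α| * M) ≤ ε) :
    ContDiffOn ℝ 1 (fun s => (ψ (A + L * κ s) - A') / L') (Icc a b) ∧
    C1CloseOn (fun s => (ψ (A + L * κ s) - A') / L') (fun x => α * ρ * k x + 0 + t)
      (Icc a b) ε := by
  obtain ⟨s₀, hs₀, hxs⟩ := hx
  have hR0 : 0 ≤ R := (abs_nonneg _).trans hr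
  have hM0 : 0 ≤ M := (abs_nonneg _).trans (hk s₀ hs₀).1
  have hW : 0 < b - a := by linarith
  have hα0 := abs_nonneg α
  have hkb : 0 ≤ |a| + |b| := by positivity
  have hd : ∀ s ∈ Icc a b, |A + L * κ s - x₀| ≤ |L| * (b - a) := by
    intro s hs
    have h1 := hκm s hs
    have h2 := hκm s₀ hs₀
    have : A + L * κ s - x₀ = L * (κ s - κ s₀) := by rw [← hxs]; ring
    rw [this, abs_mul]
    refine mul_le_mul_of_nonneg_left ?_ (abs_nonneg _)
    rw [abs_le]; constructor <;> linarith [h1.1, h1.2, h2.1, h2.2]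
  have htay : ∀ x, |x - x₀| < δ → |ψ x - ψ x₀ - α * (x - x₀)| ≤ η * |x - x₀| := by
    intro x hxδ
    have hδ : 0 < δ := (abs_nonneg _).trans_lt hxδ
    have := Convex.norm_image_sub_le_of_norm_hasDerivWithin_le
      (f := fun x => ψ x - α * x) (f' := fun x => deriv ψ x - α) (s := Metric.ball x₀ δ) (C := η)
      (x := x₀) (y := x) (fun y hy => by
        have h := (hψ y (by simpa [Real.dist_eq] using hy)).1.differentiableAt (by norm_num)
        have h2 := h.hasDerivAt.sub ((hasDerivAt_id y).const_mul α)
        rw [mul_one] at h2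
        exact h2.hasDerivWithinAt)
      (fun y hy => (hψ y (by simpa [Real.dist_eq] using hy)).2) (convex_ball _ _)
      (Metric.mem_ball_self hδ) (by simpa [Real.dist_eq] using hxδ)
    rw [Real.norm_eq_abs, Real.norm_eq_abs] at this
    refine le_trans (le_of_eq ?_) this
    congr 1; ring
  have hL'p : 0 < |L'| := abs_pos.2 hL'
  refine ⟨?_, ?_⟩
  · intro s hs
    have h1 := (hψ _ ((hd s hs).trans_lt hLδ)).1
    have h2 : ContDiffAt ℝ 1 (fun s => A + L * κ s) s :=
      (contDiff_const.add (contDiff_const.mul hκ)).contDiffAt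
    exact (((h1.comp s h2).sub contDiffAt_const).div_const L').contDiffWithinAt
  · intro s hs
    obtain ⟨hk1, hk2, hk3⟩ := hk s hs
    obtain ⟨hc1, hc2⟩ := hκk s hs
    have hdx := hd s hs
    have hψ' := hψ _ (hdx.trans_lt hLδ)
    have hks : |k s| ≤ |a| + |b| := by
      rw [abs_le]
      constructor <;> linarith [hk3.1, hk3.2, neg_abs_le a, le_abs_self b, abs_nonneg a, abs_nonneg b]
    constructor
    · have ht := htay _ (hdx.trans_lt hLδ)
      have e : (ψ (A + L * κ s) - A') / L' - (α * ρ * k s + 0 + t) =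
          (ψ (A + L * κ s) - ψ x₀ - α * (A + L * κ s - x₀)) / L' +
          ((ψ x₀ - A' + α * (A - x₀)) / L' - t) +
          α * (L / L' * (κ s - k s) + (L / L' - ρ) * k s) := by
        field_simp; ring
      have b1 : |(ψ (A + L * κ s) - ψ x₀ - α * (A + L * κ s - x₀)) / L'| ≤ η * (R * (b - a)) := by
        rw [abs_div, div_le_iff₀ hL'p]
        have h3 : |L| ≤ R * |L'| := by rwa [abs_div, div_le_iff₀ hL'p] at hr
        calc _ ≤ η * |A + L * κ s - x₀| := ht
          _ ≤ η * (|L| * (b - a)) := by gcongr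
          _ ≤ η * (R * |L'| * (b - a)) := by gcongr
          _ = _ := by ring
      have b2 : |α * (L / L' * (κ s - k s) + (L / L' - ρ) * k s)| ≤
          |α| * (R * η + η * (|a| + |b|)) := by
        rw [abs_mul]
        refine mul_le_mul_of_nonneg_left ((abs_add_le _ _).trans ?_) hα0
        rw [abs_mul, abs_mul]
        gcongr
      have hrest : 0 ≤ η * (R * (M + 1) + |α| * R + |α| * M) := by positivity
      have e2 : |(ψ (A + L * κ s) - A') / L' - (α * ρ * k s + 0 + t)| ≤ ε := by
        rw [e]
        refine (abs_add_three _ _ _).trans ?_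
        linarith
      exact e2
    · have hu : UniqueDiffWithinAt ℝ (Icc a b) s := uniqueDiffOn_Icc hab s hs
      have d1 : derivWithin (fun s => (ψ (A + L * κ s) - A') / L') (Icc a b) s =
          deriv ψ (A + L * κ s) * (L * deriv κ s) / L' := by
        have h1 := (hψ'.1.differentiableAt (by norm_num)).hasDerivAt
        have h2 : HasDerivAt (fun s => A + L * κ s) (L * deriv κ s) s :=
          (((hκ.differentiable (by norm_num)) s).hasDerivAt.const_mul L).const_add A
        have h3 := ((h1.comp s h2).sub_const A').div_const L'
        exact h3.hasDerivWithinAt.derivWithin hu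
      have d2 : derivWithin (fun x => α * ρ * k x + 0 + t) (Icc a b) s =
          α * ρ * derivWithin k (Icc a b) s := by
        have h1 := ((hk2.hasDerivWithinAt.const_mul (α * ρ)).add_const 0).add_const t
        exact h1.derivWithin hu
      rw [d1, d2]
      set k' := derivWithin k (Icc a b) s
      have e : deriv ψ (A + L * κ s) * (L * deriv κ s) / L' - α * ρ * k' =
          (deriv ψ (A + L * κ s) - α) * (L / L') * deriv κ s +
          α * (L / L') * (deriv κ s - k') + α * (L / L' - ρ) * k' := by
        field_simp; ring
      have hκ' : |deriv κ s| ≤ M + 1 := by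
        have : deriv κ s = (deriv κ s - k') + k' := by ring
        rw [this]
        exact (abs_add_le _ _).trans (by linarith)
      have b1 : |(deriv ψ (A + L * κ s) - α) * (L / L') * deriv κ s| ≤ η * R * (M + 1) := by
        rw [abs_mul, abs_mul]
        have := hψ'.2
        gcongr
      have b2 : |α * (L / L') * (deriv κ s - k')| ≤ |α| * R * η := by
        rw [abs_mul, abs_mul]; gcongr
      have b3 : |α * (L / L' - ρ) * k'| ≤ |α| * η * M := by
        rw [abs_mul, abs_mul]; gcongr
      have hrest : 0 ≤ η * (R * (b - a) + 1 + |α| * (R + (|a| + |b|))) := by positivity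
      rw [e]
      refine (abs_add_three _ _ _).trans ?_
      linarith

/-- Let `K`, `K'` be regular Cantor sets with expanding maps `g`, `g'`
such that `HD(K) + HD(K') > 1` and `(g,g') ∈ V`. If `f` is `C¹` on an open set
`U ⊇ K × K'` and at some point of `K × K'` both partial derivatives of `f` are nonzero
(the gradient is parallel to neither coordinate axis), then `f(K × K')` has nonempty
interior. -/
theorem image_of_product_has_nonempty_interior
    (C C' : RegCantorSet) (hdim : 1 < dimH C.K + dimH C'.K) (hV : MemV C C')
    (U : Set (ℝ × ℝ)) (hU : IsOpen U) (hKU : C.K ×ˢ C'.K ⊆ U)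
    (f : ℝ × ℝ → ℝ) (hf : ContDiffOn ℝ 1 f U)
    (z : ℝ × ℝ) (hz : z ∈ C.K ×ˢ C'.K)
    (hdx : fderiv ℝ f z (1, 0) ≠ 0) (hdy : fderiv ℝ f z (0, 1) ≠ 0) :
    (interior (f '' (C.K ×ˢ C'.K))).Nonempty := by
  have hzU : z ∈ U := hKU hz
  have hfz : ContDiffAt ℝ 1 f z := hf.contDiffAt (hU.mem_nhds hzU)
  obtain ⟨φ, α, hα, hφy, hφ⟩ := implicit_solution f z hfz hdx hdy
  obtain ⟨i, A, L, κ, c, -, hκs, hκm, hκK, hκx, hL, hLt, -, hκu⟩ := C.renorm z.1 hz.1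
  obtain ⟨i', A', L', κ', c', hc', hκs', hκm', hκK', hκx', hL', hLt', hcomp, hκu'⟩ :=
    C'.renorm z.2 hz.2
  obtain ⟨m, hm, hmr⟩ := match_scales hc' hL hL' hLt hLt' hcomp
  have hAt : Tendsto A atTop (𝓝 z.1) := base_tendsto hκm hκx hLt
  have hAt' : Tendsto A' atTop (𝓝 z.2) := base_tendsto hκm' hκx' hLt'
  set R := c'⁻¹ with hR
  set F : Ultrafilter ℕ := hyperfilter ℕ with hF
  have hFa : (F : Filter ℕ) ≤ atTop := Nat.hyperfilter_le_atTop
  have hFm : ((F.map m : Ultrafilter ℕ) : Filter ℕ) ≤ atTop := by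
    rw [Ultrafilter.coe_map]
    exact (Filter.map_mono hFa).trans hm
  obtain ⟨θ, hθ, hiθ, hκθ⟩ := hκu F hFa
  obtain ⟨θ', hθ', hiθ', hκθ'⟩ := hκu' (F.map m) hFm
  rw [Ultrafilter.coe_map, Filter.eventually_map] at hiθ'
  have hcpt : IsCompact {r : ℝ | 1 ≤ |r| ∧ |r| ≤ R} := by
    refine (isCompact_Icc (a := -R) (b := R)).of_isClosed_subset ?_ ?_
    · exact (isClosed_le continuous_const continuous_abs).inter
        (isClosed_le continuous_abs continuous_const)
    · intro r hr
      exact ⟨(abs_le.1 hr.2).1, (abs_le.1 hr.2).2⟩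
  obtain ⟨ρ, hρm, hρ⟩ := isCompact_iff_ultrafilter_le_nhds.1 hcpt
    (F.map (fun n => L n / L' (m n))) (by
      rw [Ultrafilter.coe_map, Filter.le_principal_iff, Filter.mem_map]
      exact hFa hmr)
  have hρt : Tendsto (fun n => L n / L' (m n)) F (𝓝 ρ) := by
    rw [Ultrafilter.coe_map] at hρ
    exact hρ
  have hρ0 : ρ ≠ 0 := by
    intro h
    have := hρm.1
    rw [h, abs_zero] at this
    linarith
  obtain ⟨t, ε, hε, hst⟩ := hV θ hθ θ' hθ' (α * ρ) 0 1 0 (mul_ne_zero hα hρ0) one_ne_zero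
  obtain ⟨M, hM, -⟩ := C.limGeom_close hθ
  obtain ⟨M', hM', -⟩ := C'.limGeom_close hθ'
  set a := C.a (θ 0) with ha
  set b := C.b (θ 0) with hb
  have hab : a < b := C.hab _
  have hM0 : 0 ≤ M := (abs_nonneg _).trans (hM a ⟨le_rfl, hab.le⟩).1
  have hR0 : 0 < R := inv_pos.2 hc'
  have hW : 0 < b - a := by linarith
  set Q : ℝ := R * (b - a) + 1 + |α| * (R + (|a| + |b|)) + R * (M + 1) + |α| * R + |α| * M with hQ
  have hQ1 : 1 ≤ Q := by
    have h1 : 0 ≤ R * (b - a) + |α| * (R + (|a| + |b|)) + R * (M + 1) + |α| * R + |α| * M := by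
      positivity
    linarith
  have hQ0 : 0 < Q := by linarith
  set η : ℝ := min 1 (ε / Q) with hη
  have hη0 : 0 < η := lt_min one_pos (div_pos hε hQ0)
  have hη1 : η ≤ 1 := min_le_left _ _
  have hηQ : η * Q ≤ ε := (le_div_iff₀ hQ0).1 (min_le_right _ _)
  have hηε : η ≤ ε := by nlinarith
  obtain ⟨δ, hδ, hφδ⟩ := hφ η hη0
  have hκ1 := hκθ η hη0
  have hκ2 := hκθ' η hη0
  rw [Ultrafilter.coe_map, Filter.eventually_map] at hκ2
  have hr1 : ∀ᶠ n in (F : Filter ℕ), |L n / L' (m n) - ρ| < η :=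
    hρt (Metric.ball_mem_nhds ρ hη0)
  have hLδ : ∀ᶠ n in (F : Filter ℕ), |L n| * (b - a) < δ := by
    have h1 : Tendsto (fun n => |L n| * (b - a)) atTop (𝓝 0) := by
      simpa using hLt.abs.mul_const (b - a)
    exact hFa (h1.eventually_lt_const hδ)
  have hyt : Tendsto (fun n => A' (m n) - α * (A n - z.1) + t * L' (m n)) atTop (𝓝 z.2) := by
    have h1 := ((hAt'.comp hm).sub ((hAt.sub_const z.1).const_mul α)).add
      ((hLt'.comp hm).const_mul t)
    simpa using h1
  have hy1 := hFa (hyt.eventually hφy)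
  have hfc : ContinuousAt (fun y => f (z.1, y)) z.2 := by
    have h1 : ContinuousAt f (z.1, z.2) := hfz.continuousAt
    exact h1.comp (f := fun y : ℝ => (z.1, y)) (by fun_prop)
  have hy2 : ∀ᶠ n in (F : Filter ℕ),
      |f (z.1, A' (m n) - α * (A n - z.1) + t * L' (m n)) - f z| < δ :=
    hFa ((hfc.tendsto.comp hyt) (Metric.ball_mem_nhds _ hδ))
  obtain ⟨n, hn1, hn2, hn3, hn4, hn5, hn6, hn7, hn8, hn9⟩ :=
    (hiθ.and (hiθ'.and (hκ1.and (hκ2.and (hr1.and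
      (hLδ.and ((show ∀ᶠ n in (F : Filter ℕ), _ from hy1).and (hy2.and (hFa hmr))))))))).exists
  set y₀ := A' (m n) - α * (A n - z.1) + t * L' (m n) with hy₀
  set c₀ := f (z.1, y₀) with hc₀
  refine ⟨c₀, mem_interior_iff_mem_nhds.2 ?_⟩
  have hcont : ContinuousAt
      (fun c => (φ c z.1 - A' (m n) + α * (A n - z.1)) / L' (m n) - t) c₀ := by
    have h1 := (hφδ c₀ hn8).1
    exact (((h1.sub continuousAt_const).add continuousAt_const).div_const _).sub continuousAt_const
  have hval : (φ c₀ z.1 - A' (m n) + α * (A n - z.1)) / L' (m n) - t = 0 := by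
    have h1 : φ c₀ z.1 = y₀ := hn7
    have h2 := hL' (m n)
    rw [h1, hy₀]
    field_simp
    ring
  have ev1 : ∀ᶠ c in 𝓝 c₀, |(φ c z.1 - A' (m n) + α * (A n - z.1)) / L' (m n) - t| < η := by
    have h1 := hcont.abs.tendsto
    rw [hval, abs_zero] at h1
    exact h1.eventually_lt_const hη0
  have ev2 : ∀ᶠ c in 𝓝 c₀, |c - f z| < δ := by
    have h1 : Continuous fun c : ℝ => |c - f z| := by fun_prop
    exact h1.continuousAt.eventually_lt_const hn8
  filter_upwards [ev1, ev2] with c hc1 hc2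
  have hIκ : ∀ s ∈ Icc a b, κ n s ∈ Icc a b := by
    have h1 := hκm n
    rw [hn1] at h1
    exact h1
  have hIx : ∃ s ∈ Icc a b, A n + L n * κ n s = z.1 := by
    have h1 := hκx n
    rw [hn1] at h1
    exact h1
  obtain ⟨hs1, hs2⟩ := step_close (k := C.limGeom θ) (ψ := φ c) (A' := A' (m n)) (ρ := ρ) (t := t)
    hab (hκs n) hIκ hIx (hL' (m n)) hn6 hn9.2 hn5.le hM hn3
    (fun x hx => ((hφδ c hc2).2 x hx).2) hc1.le hη0.le hη1 hηQ
  have hclose' : C1CloseOn (κ' (m n)) (fun x => 1 * C'.limGeom θ' x + 0)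
      (Icc (C'.a (θ' 0)) (C'.b (θ' 0))) ε := by
    intro s hs
    have h1 := hn4 s hs
    have hu := uniqueDiffOn_Icc (C'.hab (θ' 0)) s hs
    have h2 : derivWithin (fun x => 1 * C'.limGeom θ' x + 0)
        (Icc (C'.a (θ' 0)) (C'.b (θ' 0))) s =
        derivWithin (C'.limGeom θ') (Icc (C'.a (θ' 0)) (C'.b (θ' 0))) s := by
      simp only [one_mul, add_zero]
    have h3 : derivWithin (κ' (m n)) (Icc (C'.a (θ' 0)) (C'.b (θ' 0))) s = deriv (κ' (m n)) s :=
      (((hκs' (m n)).differentiable (by norm_num)) s).derivWithin hu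
    rw [h2, h3]
    simp only [one_mul, add_zero]
    exact ⟨h1.1.trans hηε, h1.2.trans hηε⟩
  obtain ⟨w, ⟨s, hs, hsw⟩, ⟨s', hs', hsw'⟩⟩ :=
    hst _ (κ' (m n)) hs1 (hκs' (m n)).contDiffOn hs2 hclose'
  have hxK : A n + L n * κ n s ∈ C.K := by
    have h1 := hκK n
    rw [hn1] at h1
    exact h1 s hs
  have hyK : A' (m n) + L' (m n) * κ' (m n) s' ∈ C'.K := by
    have h1 := hκK' (m n)
    rw [hn2] at h1
    exact h1 s' hs'
  have hφx : φ c (A n + L n * κ n s) = A' (m n) + L' (m n) * κ' (m n) s' := by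
    have h2 := hL' (m n)
    have h1 : (φ c (A n + L n * κ n s) - A' (m n)) / L' (m n) = κ' (m n) s' := hsw.trans hsw'.symm
    rw [div_eq_iff h2] at h1
    linarith
  have hxδ : |A n + L n * κ n s - z.1| < δ := by
    obtain ⟨s₀, hs₀, e⟩ := hIx
    have h1 := hIκ s hs.2
    have h2 := hIκ s₀ hs₀
    have h3 : A n + L n * κ n s - z.1 = L n * (κ n s - κ n s₀) := by rw [← e]; ring
    rw [h3, abs_mul]
    refine lt_of_le_of_lt (mul_le_mul_of_nonneg_left ?_ (abs_nonneg _)) hn6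
    rw [abs_le]
    constructor <;> linarith [h1.1, h1.2, h2.1, h2.2]
  refine ⟨(A n + L n * κ n s, φ c (A n + L n * κ n s)), ⟨hxK, ?_⟩, ((hφδ c hc2).2 _ hxδ).1⟩
  show φ c (A n + L n * κ n s) ∈ C'.K
  rw [hφx]
  exact hyK
end
end

section
/- Let K be a regular Cantor set defined by a C^{1+} expanding map ψ with Markov partition ℛ = {K_1,…,K_k}, so that K = ⋂_{n≥0} ψ⁻ⁿ(K_1 ∪ … ∪ K_k). For a finite admissible word b̲ = (b_1,…,b_m) let I_b̲ = I_{b_1} ∩ ψ⁻¹(I_{b_2}) ∩ … ∩ ψ^{-(m-1)}(I_{b_m}) be the corresponding cylinder interval, and let K_b̲ = ⋂_{n≥0} ψ⁻ⁿ((⋃_{i=1}^k K_i) \ I_b̲) be the Cantor set obtained by removing the cylinder I_b̲. Then for every ε > 0 there is m₀ such that for every admissible word b̲ of length m ≥ m₀ one has HD(K_b̲) ≥ HD(K) − ε; that is, the loss of Hausdorff dimension caused by removing a cylinder tends to 0 as the depth m of the cylinder tends to infinity. -/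
noncomputable section
open Set Filter Topology MeasureTheory
open scoped ENNReal

/-- A regular Cantor set in the line, defined by a `C^{1+}` expanding map `ψ` with a
Markov partition by disjoint compact intervals `K_i = [a i, b i]`. -/
structure RegularCantorData where
  k : ℕ
  hk : 0 < k
  a : Fin k → ℝ
  b : Fin k → ℝ
  hab : ∀ i, a i < b i
  disj : ∀ i j, i ≠ j → Disjoint (Icc (a i) (b i)) (Icc (a j) (b j))
  ψ : ℝ → ℝ
  smooth : ContDiffOn ℝ 1 ψ (⋃ i, Icc (a i) (b i))
  holder : ∃ C r : NNReal, 0 < r ∧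
    HolderOnWith C r (fun x => derivWithin ψ (⋃ i, Icc (a i) (b i)) x)
      (⋃ i, Icc (a i) (b i))
  expanding : ∃ lam : ℝ, 1 < lam ∧
    ∀ x ∈ ⋃ i, Icc (a i) (b i), lam ≤ |derivWithin ψ (⋃ i, Icc (a i) (b i)) x|
  markov : ∀ i j, (ψ '' Icc (a i) (b i) ∩ Icc (a j) (b j)).Nonempty →
    Icc (a j) (b j) ⊆ ψ '' Icc (a i) (b i)

namespace RegularCantorData

variable (D : RegularCantorData)

/-- The union of the partition intervals. -/
def domain : Set ℝ := ⋃ i, Icc (D.a i) (D.b i)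

/-- The regular Cantor set `K = ⋂_{n≥0} ψ⁻ⁿ(K_1 ∪ … ∪ K_k)`. -/
def K : Set ℝ := {x | ∀ n : ℕ, D.ψ^[n] x ∈ D.domain}

/-- Admissibility of the finite word `w` of length `m`. -/
def Admissible (m : ℕ) (w : ℕ → Fin D.k) : Prop :=
  ∀ l : ℕ, l + 1 < m → Icc (D.a (w (l + 1))) (D.b (w (l + 1))) ⊆
    D.ψ '' Icc (D.a (w l)) (D.b (w l))

/-- The cylinder interval `I_b̲ = I_{b_1} ∩ ψ⁻¹(I_{b_2}) ∩ … ∩ ψ^{-(m-1)}(I_{b_m})`. -/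
def cyl (m : ℕ) (w : ℕ → Fin D.k) : Set ℝ :=
  ⋂ j ∈ Finset.range m, (D.ψ^[j]) ⁻¹' Icc (D.a (w j)) (D.b (w j))

/-- The Cantor set `K_b̲` obtained by removing the cylinder `I_b̲`. -/
def Kremoved (m : ℕ) (w : ℕ → Fin D.k) : Set ℝ :=
  {x | ∀ n : ℕ, D.ψ^[n] x ∈ D.domain \ D.cyl m w}

end RegularCantorData

/-! ### Part 1: lower bound for the dimension of the limit set of a finite iterated scheme -/

theorem ifs_finite_cover {ι : Type*} [DecidableEq ι] (F : Finset ι) (c : ι → Set ℝ) (f : ℝ → ℝ) (Λ : Set ℝ)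
    (L : ι → NNReal) (s : NNReal) (d : ℝ≥0∞)
    (hcard : ∀ u ∈ F, ∃ v ∈ F, u ≠ v)
    (hF : F.Nonempty)
    (hLip : ∀ u ∈ F, LipschitzOnWith (L u) f (c u)) (hL : ∀ u ∈ F, 0 < L u)
    (hd : ∀ u ∈ F, ∀ v ∈ F, u ≠ v → ∀ x ∈ c u, ∀ y ∈ c v, d ≤ edist x y)
    (hne : Λ.Nonempty)
    (hsurj : ∀ u ∈ F, ∀ y ∈ Λ, ∃ x ∈ Λ, x ∈ c u ∧ f x = y)
    (hsum : (1 : ℝ≥0∞) ≤ ∑ u ∈ F, ((L u : ℝ≥0∞)⁻¹) ^ (s : ℝ)) :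
    ∀ N : ℕ, ∀ T : Finset ℕ, T.card ≤ N → ∀ U : ℕ → Set ℝ, Λ ⊆ ⋃ i ∈ T, U i →
      d ^ (s : ℝ) ≤ ∑ i ∈ T, Metric.ediam (U i) ^ (s : ℝ) := by
  classical
  intro N
  induction N with
  | zero =>
    intro T hT U hU
    obtain ⟨x, hx⟩ := hne
    have := hU hx
    have hT0 : T = ∅ := Finset.card_eq_zero.1 (by omega)
    simp [hT0] at this
  | succ N ih =>
    intro T hT U hU
    by_cases hbig : ∃ i ∈ T, d ≤ Metric.ediam (U i)
    · obtain ⟨i, hi, hdi⟩ := hbig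
      exact (ENNReal.rpow_le_rpow hdi s.coe_nonneg).trans
        (Finset.single_le_sum (f := fun i => Metric.ediam (U i) ^ (s : ℝ))
          (fun _ _ => zero_le) hi)
    push Not at hbig
    set S : ι → Finset ℕ := fun u => T.filter (fun i => (U i ∩ c u).Nonempty) with hS
    have hdisjS : ∀ u ∈ F, ∀ v ∈ F, u ≠ v → Disjoint (S u) (S v) := by
      intro u hu v hv huv
      rw [Finset.disjoint_left]
      intro i hiu hiv
      obtain ⟨hiT, x, hxU, hxc⟩ := Finset.mem_filter.1 hiu
      obtain ⟨_, y, hyU, hyc⟩ := Finset.mem_filter.1 hiv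
      have h1 := hd u hu v hv huv x hxc y hyc
      have h2 := Metric.edist_le_ediam_of_mem hxU hyU
      exact absurd (h1.trans h2) (not_le.2 (hbig i hiT))
    have hneS : ∀ u ∈ F, (S u).Nonempty := by
      intro u hu
      obtain ⟨y, hy⟩ := hne
      obtain ⟨x, hx, hxc, -⟩ := hsurj u hu y hy
      have := hU hx
      simp only [mem_iUnion] at this
      obtain ⟨i, hi, hxi⟩ := this
      exact ⟨i, Finset.mem_filter.2 ⟨hi, x, hxi, hxc⟩⟩
    have hcardS : ∀ u ∈ F, (S u).card ≤ N := by
      intro u hu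
      obtain ⟨v, hv, huv⟩ := hcard u hu
      have h1 := Finset.card_union_of_disjoint (hdisjS u hu v hv huv)
      have h2 : (S u ∪ S v).card ≤ T.card := Finset.card_le_card
        (Finset.union_subset (Finset.filter_subset _ _) (Finset.filter_subset _ _))
      have h3 := (hneS v hv).card_pos
      omega
    have hstep : ∀ u ∈ F, ((L u : ℝ≥0∞)⁻¹) ^ (s : ℝ) * d ^ (s : ℝ) ≤
        ∑ i ∈ S u, Metric.ediam (U i) ^ (s : ℝ) := by
      intro u hu
      have h1 := ih (S u) (hcardS u hu) (fun i => f '' (U i ∩ c u)) (by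
        intro y hy
        obtain ⟨x, hx, hxc, hxy⟩ := hsurj u hu y hy
        have := hU hx
        simp only [mem_iUnion] at this
        obtain ⟨i, hi, hxi⟩ := this
        simp only [mem_iUnion]
        exact ⟨i, Finset.mem_filter.2 ⟨hi, x, hxi, hxc⟩, x, ⟨hxi, hxc⟩, hxy⟩)
      calc ((L u : ℝ≥0∞)⁻¹) ^ (s : ℝ) * d ^ (s : ℝ)
          ≤ ((L u : ℝ≥0∞)⁻¹) ^ (s : ℝ) *
            ∑ i ∈ S u, Metric.ediam (f '' (U i ∩ c u)) ^ (s : ℝ) := by gcongr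
        _ = ∑ i ∈ S u, ((L u : ℝ≥0∞)⁻¹ * Metric.ediam (f '' (U i ∩ c u))) ^ (s : ℝ) := by
            rw [Finset.mul_sum]
            refine Finset.sum_congr rfl fun i _ => ?_
            exact (ENNReal.mul_rpow_of_nonneg _ _ s.coe_nonneg).symm
        _ ≤ ∑ i ∈ S u, Metric.ediam (U i) ^ (s : ℝ) := by
            refine Finset.sum_le_sum fun i _ => ENNReal.rpow_le_rpow ?_ s.coe_nonneg
            have h2 : Metric.ediam (f '' (U i ∩ c u)) ≤ L u * Metric.ediam (U i) := by
              refine Metric.ediam_le ?_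
              rintro _ ⟨x, ⟨hxU, hxc⟩, rfl⟩ _ ⟨y, ⟨hyU, hyc⟩, rfl⟩
              refine (hLip u hu hxc hyc).trans ?_
              gcongr
              exact Metric.edist_le_ediam_of_mem hxU hyU
            have hL0 : (L u : ℝ≥0∞) ≠ 0 := by simpa using (hL u hu).ne'
            calc (L u : ℝ≥0∞)⁻¹ * Metric.ediam (f '' (U i ∩ c u))
                ≤ (L u : ℝ≥0∞)⁻¹ * (L u * Metric.ediam (U i)) := by gcongr
              _ = Metric.ediam (U i) := by
                rw [← mul_assoc, ENNReal.inv_mul_cancel hL0 ENNReal.coe_ne_top, one_mul]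
    calc d ^ (s : ℝ) = 1 * d ^ (s : ℝ) := (one_mul _).symm
      _ ≤ (∑ u ∈ F, ((L u : ℝ≥0∞)⁻¹) ^ (s : ℝ)) * d ^ (s : ℝ) := by gcongr
      _ = ∑ u ∈ F, ((L u : ℝ≥0∞)⁻¹) ^ (s : ℝ) * d ^ (s : ℝ) := Finset.sum_mul _ _ _
      _ ≤ ∑ u ∈ F, ∑ i ∈ S u, Metric.ediam (U i) ^ (s : ℝ) := Finset.sum_le_sum hstep
      _ = ∑ i ∈ F.biUnion S, Metric.ediam (U i) ^ (s : ℝ) := by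
          rw [Finset.sum_biUnion]
          intro u hu v hv huv
          exact hdisjS u hu v hv huv
      _ ≤ ∑ i ∈ T, Metric.ediam (U i) ^ (s : ℝ) := by
          refine Finset.sum_le_sum_of_subset ?_
          exact Finset.biUnion_subset.2 fun u _ => Finset.filter_subset _ _

/-- From finite covers to dimension, for compact sets. -/
theorem le_dimH_of_finite_cover (Λ : Set ℝ) (hΛ : IsCompact Λ) (s : NNReal) (hs : 0 < s)
    (e : ℝ≥0∞) (he : e ≠ 0)
    (h : ∀ T : Finset ℕ, ∀ U : ℕ → Set ℝ, Λ ⊆ ⋃ i ∈ T, U i →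
      e ≤ ∑ i ∈ T, Metric.ediam (U i) ^ (s : ℝ)) : (s : ℝ≥0∞) ≤ dimH Λ := by
  by_contra hcon
  push Not at hcon
  have h0 := hausdorffMeasure_of_dimH_lt hcon
  rw [Measure.hausdorffMeasure_apply] at h0
  have h1 := (iSup_eq_bot.1 h0) 1
  have h2 := (iSup_eq_bot.1 h1) one_pos
  have he2 : e / 2 ≠ 0 := by simpa using he
  have h3 : (⨅ t : ℕ → Set ℝ, ⨅ (_ : Λ ⊆ ⋃ n, t n),
    ⨅ (_ : ∀ (n : ℕ), Metric.ediam (t n) ≤ 1),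
      ∑' (n : ℕ), ⨆ (_ : (t n).Nonempty), Metric.ediam (t n) ^ (s : ℝ)) < e / 2 := by
    rw [h2]; exact bot_lt_iff_ne_bot.2 he2
  simp only [iInf_lt_iff] at h3
  obtain ⟨t, ht, htd, hsum⟩ := h3
  obtain ⟨δ, hδ, hδs⟩ := ENNReal.exists_pos_sum_of_countable he2 ℕ
  have hU : ∀ n, ∃ V : Set ℝ, IsOpen V ∧ t n ⊆ V ∧
      Metric.ediam V ^ (s : ℝ) ≤ (⨆ (_ : (t n).Nonempty), Metric.ediam (t n) ^ (s : ℝ)) + δ n := by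
    intro n
    rcases (t n).eq_empty_or_nonempty with h | h
    · refine ⟨∅, isOpen_empty, h.subset, ?_⟩
      simp [hs]
    · have hfin : Metric.ediam (t n) ≠ ⊤ := ((htd n).trans_lt ENNReal.one_lt_top).ne
      have hcont : Continuous fun ε : NNReal => (Metric.ediam (t n) + 2 * (ε : ℝ≥0∞)) ^ (s : ℝ) := by
        refine ENNReal.continuous_rpow_const.comp ?_
        refine continuous_const.add ?_
        exact (ENNReal.continuous_const_mul (by simp)).comp ENNReal.continuous_coe
      have hlt : (Metric.ediam (t n) + 2 * ((0 : NNReal) : ℝ≥0∞)) ^ (s : ℝ) <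
          Metric.ediam (t n) ^ (s : ℝ) + δ n := by
        simp only [ENNReal.coe_zero, mul_zero, add_zero]
        refine ENNReal.lt_add_right ?_ ?_
        · exact (ENNReal.rpow_lt_top_of_nonneg s.coe_nonneg hfin).ne
        · simpa using (hδ n).ne'
      have hev := (hcont.tendsto 0).eventually (gt_mem_nhds hlt)
      have hev2 : ∀ᶠ ε : NNReal in 𝓝[>] (0 : NNReal), (Metric.ediam (t n) + 2 * (ε : ℝ≥0∞)) ^ (s : ℝ) <
          Metric.ediam (t n) ^ (s : ℝ) + δ n := nhdsWithin_le_nhds hev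
      obtain ⟨ε, hε, hε0⟩ := (hev2.and self_mem_nhdsWithin).exists
      refine ⟨Metric.thickening ε (t n), Metric.isOpen_thickening,
        Metric.self_subset_thickening (by exact_mod_cast hε0) _, ?_⟩
      simp only [h, iSup_pos]
      exact (ENNReal.rpow_le_rpow (Metric.ediam_thickening_le ε) s.coe_nonneg).trans hε.le
  choose V hVo hVt hVd using hU
  obtain ⟨T, hT⟩ := hΛ.elim_finite_subcover V hVo
    (ht.trans (iUnion_mono hVt))
  have hfinal := h T V hT
  have : ∑ i ∈ T, Metric.ediam (V i) ^ (s : ℝ) < e := by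
    calc ∑ i ∈ T, Metric.ediam (V i) ^ (s : ℝ)
        ≤ ∑ i ∈ T, ((⨆ (_ : (t i).Nonempty), Metric.ediam (t i) ^ (s : ℝ)) + δ i) :=
          Finset.sum_le_sum fun i _ => hVd i
      _ ≤ ∑' i, ((⨆ (_ : (t i).Nonempty), Metric.ediam (t i) ^ (s : ℝ)) + δ i) :=
          ENNReal.sum_le_tsum T
      _ = (∑' i, (⨆ (_ : (t i).Nonempty), Metric.ediam (t i) ^ (s : ℝ))) + ∑' i, (δ i : ℝ≥0∞) :=
          ENNReal.tsum_add
      _ < e / 2 + e / 2 := ENNReal.add_lt_add hsum hδs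
      _ = e := ENNReal.add_halves e
  exact absurd hfinal (not_le.2 this)

theorem ifs_lower_bound {ι : Type*} [DecidableEq ι] (F : Finset ι) (c : ι → Set ℝ) (f : ℝ → ℝ)
    (J : Set ℝ) (L : ι → NNReal) (s : NNReal) (hs : 0 < s)
    (hcard : ∀ u ∈ F, ∃ v ∈ F, u ≠ v) (hF : F.Nonempty) (hJ : J.Nonempty)
    (hc : ∀ u ∈ F, IsCompact (c u))
    (hLip : ∀ u ∈ F, LipschitzOnWith (L u) f (c u)) (hL : ∀ u ∈ F, 0 < L u)
    (hdisj : ∀ u ∈ F, ∀ v ∈ F, u ≠ v → Disjoint (c u) (c v))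
    (hsub : ∀ u ∈ F, c u ⊆ J) (hsurj : ∀ u ∈ F, J ⊆ f '' c u)
    (hsum : (1 : ℝ≥0∞) ≤ ∑ u ∈ F, ((L u : ℝ≥0∞)⁻¹) ^ (s : ℝ)) :
    (s : ℝ≥0∞) ≤ dimH {x | ∀ j : ℕ, f^[j] x ∈ ⋃ u ∈ F, c u} := by
  classical
  set P : Set ℝ := ⋃ u ∈ F, c u with hP
  have hPc : IsCompact P := F.isCompact_biUnion hc
  have hPJ : P ⊆ J := iUnion₂_subset hsub
  have hcl : ∀ u ∈ F, ∀ Z : Set ℝ, IsClosed Z → IsClosed (c u ∩ f ⁻¹' Z) := fun u hu Z hZ =>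
    (hLip u hu).continuousOn.preimage_isClosed_of_isClosed (hc u hu).isClosed hZ
  have hclP : ∀ Z : Set ℝ, IsClosed Z → IsClosed (P ∩ f ⁻¹' Z) := by
    intro Z hZ
    have : P ∩ f ⁻¹' Z = ⋃ u ∈ F, (c u ∩ f ⁻¹' Z) := by
      rw [hP, iUnion₂_inter]
    rw [this]
    exact isClosed_biUnion_finset fun u hu => hcl u hu Z hZ
  set Q : ℕ → Set ℝ := fun n => {x | ∀ j ≤ n, f^[j] x ∈ P} with hQ
  have hQ0 : Q 0 = P := by ext x; simp [hQ]
  have hQs : ∀ n, Q (n + 1) = P ∩ f ⁻¹' (Q n) := by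
    intro n
    ext x
    constructor
    · intro hx
      refine ⟨hx 0 (by omega), fun j hj => ?_⟩
      have := hx (j + 1) (by omega)
      rwa [Function.iterate_succ_apply] at this
    · rintro ⟨hx, hx2⟩ j hj
      cases j with
      | zero => exact hx
      | succ j =>
        rw [Function.iterate_succ_apply]
        exact hx2 j (by omega)
  have hQcl : ∀ n, IsClosed (Q n) := by
    intro n
    induction n with
    | zero => rw [hQ0]; exact hPc.isClosed
    | succ n ih => rw [hQs]; exact hclP _ ih
  obtain ⟨u₀, hu₀⟩ := hF
  have hQne : ∀ n, (Q n).Nonempty := by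
    intro n
    induction n with
    | zero =>
      rw [hQ0]
      obtain ⟨y, hy⟩ := hJ
      obtain ⟨x, hx, -⟩ := hsurj u₀ hu₀ hy
      exact ⟨x, mem_iUnion₂.2 ⟨u₀, hu₀, hx⟩⟩
    | succ n ih =>
      obtain ⟨y, hy⟩ := ih
      obtain ⟨x, hx, hxy⟩ := hsurj u₀ hu₀ (hPJ (hy 0 (by omega)))
      rw [hQs]
      refine ⟨x, mem_iUnion₂.2 ⟨u₀, hu₀, hx⟩, ?_⟩
      simpa [hxy] using hy
  have hΛQ : {x | ∀ j : ℕ, f^[j] x ∈ P} = ⋂ n, Q n := by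
    ext x
    simp only [mem_ofPred_eq, mem_iInter, hQ]
    exact ⟨fun h n j _ => h j, fun h j => h j j le_rfl⟩
  have hΛne : {x | ∀ j : ℕ, f^[j] x ∈ P}.Nonempty := by
    rw [hΛQ]
    refine IsCompact.nonempty_iInter_of_sequence_nonempty_isCompact_isClosed Q ?_ hQne ?_ hQcl
    · intro i x hx j hj
      exact hx j (by omega)
    · rw [hQ0]; exact hPc
  have hΛc : IsCompact {x | ∀ j : ℕ, f^[j] x ∈ P} := by
    refine hPc.of_isClosed_subset ?_ (fun x hx => hx 0)
    rw [hΛQ]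
    exact isClosed_iInter hQcl
  obtain ⟨d, hd, hd0⟩ : ∃ d : NNReal, (∀ u ∈ F, ∀ v ∈ F, u ≠ v → ∀ x ∈ c u, ∀ y ∈ c v,
      (d : ℝ≥0∞) ≤ edist x y) ∧ 0 < d := by
    have : ∀ᶠ d : NNReal in 𝓝[>] (0 : NNReal), ∀ u ∈ F, ∀ v ∈ F, u ≠ v → ∀ x ∈ c u, ∀ y ∈ c v,
      (d : ℝ≥0∞) ≤ edist x y := by
      rw [Filter.eventually_all_finset]
      intro u hu
      rw [Filter.eventually_all_finset]
      intro v hv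
      by_cases huv : u = v
      · simp [huv]
      obtain ⟨r, hr, hr2⟩ := Metric.exists_pos_forall_lt_edist (hc u hu) (hc v hv).isClosed
        (hdisj u hu v hv huv)
      have : ∀ᶠ d : NNReal in 𝓝[>] (0 : NNReal), d < r := nhdsWithin_le_nhds (gt_mem_nhds hr)
      filter_upwards [this] with d hd _ x hx y hy
      exact le_trans (by exact_mod_cast hd.le) (hr2 x hx y hy).le
    exact (this.and self_mem_nhdsWithin).exists
  refine le_dimH_of_finite_cover _ hΛc s hs ((d : ℝ≥0∞) ^ (s : ℝ)) ?_ ?_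
  · have : (0 : ℝ≥0∞) < (d : ℝ≥0∞) := by exact_mod_cast hd0
    exact (ENNReal.rpow_pos this ENNReal.coe_ne_top).ne'
  · intro T U hU
    refine ifs_finite_cover F c f _ L s d hcard ⟨u₀, hu₀⟩ hLip hL hd hΛne ?_ hsum T.card T le_rfl U hU
    intro u hu y hy
    obtain ⟨x, hx, hxy⟩ := hsurj u hu (hPJ (hy 0))
    refine ⟨x, ?_, hx, hxy⟩
    intro j
    cases j with
    | zero => exact mem_iUnion₂.2 ⟨u, hu, hx⟩
    | succ j => rw [Function.iterate_succ_apply, hxy]; exact hy j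

/-! ### Part 2: geometry of cylinders -/

namespace RegularCantorData

theorem mem_cyl {D : RegularCantorData} {m : ℕ} {w : ℕ → Fin D.k} {x : ℝ} :
    x ∈ D.cyl m w ↔ ∀ j < m, D.ψ^[j] x ∈ Icc (D.a (w j)) (D.b (w j)) := by
  simp [cyl]

theorem cyl_shift {D : RegularCantorData} {n : ℕ} {w : ℕ → Fin D.k} {x : ℝ} :
    x ∈ D.cyl (n + 1) w ↔ x ∈ Icc (D.a (w 0)) (D.b (w 0)) ∧
      D.ψ x ∈ D.cyl n (fun j => w (j + 1)) := by
  rw [mem_cyl, mem_cyl]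
  constructor
  · intro h
    refine ⟨h 0 (by omega), fun j hj => ?_⟩
    have := h (j + 1) (by omega)
    rwa [Function.iterate_succ_apply] at this
  · rintro ⟨h0, h⟩ j hj
    cases j with
    | zero => exact h0
    | succ j => rw [Function.iterate_succ_apply]; exact h j (by omega)

theorem cyl_anti {D : RegularCantorData} {n m : ℕ} (h : n ≤ m) (w : ℕ → Fin D.k) :
    D.cyl m w ⊆ D.cyl n w := fun _ hx => mem_cyl.2 fun j hj => mem_cyl.1 hx j (by omega)

theorem word_eq {D : RegularCantorData} {n : ℕ} {u v : ℕ → Fin D.k} {x : ℝ}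
    (hu : x ∈ D.cyl n u) (hv : x ∈ D.cyl n v) : ∀ j < n, u j = v j := by
  intro j hj
  by_contra hne
  exact Set.disjoint_left.1 (D.disj _ _ hne) (mem_cyl.1 hu j hj) (mem_cyl.1 hv j hj)

theorem mvt (D : RegularCantorData) (i : Fin D.k) {x y : ℝ} (hx : x ∈ Icc (D.a i) (D.b i))
    (hy : y ∈ Icc (D.a i) (D.b i)) : ∃ ξ ∈ uIcc x y, ξ ∈ D.domain ∧
      |D.ψ x - D.ψ y| = |derivWithin D.ψ (⋃ i, Icc (D.a i) (D.b i)) ξ| * |x - y| := by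
  wlog hxy : x ≤ y generalizing x y
  · obtain ⟨ξ, h1, h2, h3⟩ := this hy hx (le_of_not_ge hxy)
    refine ⟨ξ, by rwa [uIcc_comm], h2, ?_⟩
    rw [abs_sub_comm, h3, abs_sub_comm y x]
  have hsub : ∀ ξ ∈ Icc x y, ξ ∈ ⋃ i, Icc (D.a i) (D.b i) := fun ξ hξ =>
    mem_iUnion.2 ⟨i, hx.1.trans hξ.1, hξ.2.trans hy.2⟩
  rcases hxy.eq_or_lt with rfl | hlt
  · exact ⟨x, left_mem_uIcc, hsub x ⟨le_rfl, le_rfl⟩, by simp⟩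
  have hnhds : ∀ ξ ∈ Ioo x y, (⋃ i, Icc (D.a i) (D.b i)) ∈ 𝓝 ξ := fun ξ hξ =>
    mem_of_superset (Icc_mem_nhds hξ.1 hξ.2) hsub
  have hdiff := D.smooth.differentiableOn one_ne_zero
  obtain ⟨ξ, hξ, hd⟩ := exists_deriv_eq_slope D.ψ hlt
    (D.smooth.continuousOn.mono hsub)
    (fun ξ hξ => ((hdiff ξ (hsub ξ (Ioo_subset_Icc_self hξ))).differentiableAt
      (hnhds ξ hξ)).differentiableWithinAt)
  refine ⟨ξ, ?_, hsub ξ (Ioo_subset_Icc_self hξ), ?_⟩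
  · rw [uIcc_of_le hxy]; exact Ioo_subset_Icc_self hξ
  · rw [derivWithin_of_mem_nhds (hnhds ξ hξ), hd, abs_div, abs_sub_comm y x,
      abs_sub_comm (D.ψ y), div_mul_cancel₀]
    exact abs_ne_zero.2 (sub_ne_zero.2 hlt.ne)

theorem expand_one (D : RegularCantorData) {lam : ℝ}
    (hlam : ∀ x ∈ ⋃ i, Icc (D.a i) (D.b i), lam ≤ |derivWithin D.ψ (⋃ i, Icc (D.a i) (D.b i)) x|)
    (i : Fin D.k) {x y : ℝ} (hx : x ∈ Icc (D.a i) (D.b i))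
    (hy : y ∈ Icc (D.a i) (D.b i)) : lam * |x - y| ≤ |D.ψ x - D.ψ y| := by
  obtain ⟨ξ, -, h2, h3⟩ := D.mvt i hx hy
  rw [h3]
  exact mul_le_mul_of_nonneg_right (hlam ξ h2) (abs_nonneg _)

theorem expand_iter (D : RegularCantorData) {lam : ℝ} (h1 : 1 < lam)
    (hlam : ∀ x ∈ ⋃ i, Icc (D.a i) (D.b i), lam ≤ |derivWithin D.ψ (⋃ i, Icc (D.a i) (D.b i)) x|)
    (n : ℕ) (u : ℕ → Fin D.k) {x y : ℝ} (hx : x ∈ D.cyl n u) (hy : y ∈ D.cyl n u) :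
    lam ^ n * |x - y| ≤ |D.ψ^[n] x - D.ψ^[n] y| := by
  induction n with
  | zero => simp
  | succ n ih =>
    have h2 := ih (cyl_anti (by omega) u hx) (cyl_anti (by omega) u hy)
    have h3 := D.expand_one hlam (u n) (mem_cyl.1 hx n (by omega)) (mem_cyl.1 hy n (by omega))
    rw [Function.iterate_succ_apply', Function.iterate_succ_apply']
    refine le_trans ?_ h3
    rw [pow_succ', mul_assoc]
    exact mul_le_mul_of_nonneg_left h2 (by linarith)

theorem cyl_surj (D : RegularCantorData) (n : ℕ) (u : ℕ → Fin D.k) (hu : D.Admissible (n + 1) u)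
    {y : ℝ} (hy : y ∈ Icc (D.a (u n)) (D.b (u n))) : ∃ x ∈ D.cyl (n + 1) u, D.ψ^[n] x = y := by
  induction n generalizing u with
  | zero =>
    refine ⟨y, mem_cyl.2 fun j hj => ?_, rfl⟩
    obtain rfl : j = 0 := by omega
    exact hy
  | succ n ih =>
    obtain ⟨x', hx', hxy⟩ := ih (fun j => u (j + 1)) (fun l hl => hu (l + 1) (by omega)) hy
    obtain ⟨x, hx, hxx⟩ := hu 0 (by omega) (mem_cyl.1 hx' 0 (by omega))
    have hxx' : D.ψ x = x' := hxx
    refine ⟨x, cyl_shift.2 ⟨hx, by rwa [hxx']⟩, ?_⟩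
    rw [Function.iterate_succ_apply, hxx', hxy]

theorem cyl_isCompact (D : RegularCantorData) (n : ℕ) (u : ℕ → Fin D.k) :
    IsCompact (D.cyl (n + 1) u) := by
  have hcl : IsClosed (D.cyl (n + 1) u) := by
    induction n generalizing u with
    | zero =>
      have : D.cyl 1 u = Icc (D.a (u 0)) (D.b (u 0)) := by
        ext x; rw [mem_cyl]; simp
      rw [zero_add, this]; exact isClosed_Icc
    | succ n ih =>
      have : D.cyl (n + 1 + 1) u = Icc (D.a (u 0)) (D.b (u 0)) ∩
          D.ψ ⁻¹' (D.cyl (n + 1) (fun j => u (j + 1))) := by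
        ext x; rw [cyl_shift]; rfl
      rw [this]
      refine ContinuousOn.preimage_isClosed_of_isClosed ?_ isClosed_Icc (ih _)
      exact D.smooth.continuousOn.mono (subset_iUnion (fun i => Icc (D.a i) (D.b i)) (u 0))
  refine (isCompact_Icc (a := D.a (u 0)) (b := D.b (u 0))).of_isClosed_subset hcl ?_
  intro x hx
  exact (cyl_shift.1 hx).1

theorem abs_hull {x y z t ξ ζ ρ : ℝ} (h1 : |x - z| ≤ ρ) (h2 : |x - t| ≤ ρ) (h3 : |y - z| ≤ ρ)
    (h4 : |y - t| ≤ ρ) (hξ : ξ ∈ uIcc x y) (hζ : ζ ∈ uIcc z t) : |ξ - ζ| ≤ ρ := by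
  rw [mem_uIcc] at hξ hζ
  rw [abs_le] at *
  rcases hξ with hξ | hξ <;> rcases hζ with hζ | hζ <;> constructor <;> linarith [h1.1, h1.2, h2.1,
    h2.2, h3.1, h3.2, h4.1, h4.2, hξ.1, hξ.2, hζ.1, hζ.2]

theorem one_step (D : RegularCantorData) {C r : NNReal}
    (hlam : ∀ x ∈ ⋃ i, Icc (D.a i) (D.b i), 1 ≤ |derivWithin D.ψ (⋃ i, Icc (D.a i) (D.b i)) x|)
    (hH : HolderOnWith C r (fun x => derivWithin D.ψ (⋃ i, Icc (D.a i) (D.b i)) x)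
      (⋃ i, Icc (D.a i) (D.b i)))
    (i : Fin D.k) {x y z t ρ : ℝ} (hx : x ∈ Icc (D.a i) (D.b i)) (hy : y ∈ Icc (D.a i) (D.b i))
    (hz : z ∈ Icc (D.a i) (D.b i)) (ht : t ∈ Icc (D.a i) (D.b i))
    (h1 : |x - z| ≤ ρ) (h2 : |x - t| ≤ ρ) (h3 : |y - z| ≤ ρ) (h4 : |y - t| ≤ ρ) :
    |D.ψ x - D.ψ y| * |z - t| ≤ (1 + C * ρ ^ (r : ℝ)) * (|D.ψ z - D.ψ t| * |x - y|) := by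
  obtain ⟨ξ, hξ, hξd, e1⟩ := D.mvt i hx hy
  obtain ⟨ζ, hζ, hζd, e2⟩ := D.mvt i hz ht
  have hρ := abs_hull h1 h2 h3 h4 hξ hζ
  have hρ0 : 0 ≤ ρ := (abs_nonneg _).trans hρ
  have hd := hH.dist_le hξd hζd
  rw [Real.dist_eq, Real.dist_eq] at hd
  have hd2 : (C : ℝ) * |ξ - ζ| ^ (r : ℝ) ≤ C * ρ ^ (r : ℝ) := by gcongr
  set p := derivWithin D.ψ (⋃ i, Icc (D.a i) (D.b i)) ξ
  set q := derivWithin D.ψ (⋃ i, Icc (D.a i) (D.b i)) ζ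
  have hq : 1 ≤ |q| := hlam ζ hζd
  have hpq : |p| ≤ (1 + C * ρ ^ (r : ℝ)) * |q| := by
    have h5 : |p| ≤ |p - q| + |q| := by simpa using abs_add_le (p - q) q
    have h6 : 0 ≤ (C : ℝ) * ρ ^ (r : ℝ) := by positivity
    nlinarith
  rw [e1, e2]
  have h7 : 0 ≤ |x - y| * |z - t| := by positivity
  calc |p| * |x - y| * |z - t| = |p| * (|x - y| * |z - t|) := by ring
    _ ≤ (1 + C * ρ ^ (r : ℝ)) * |q| * (|x - y| * |z - t|) := by gcongr
    _ = _ := by ring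

theorem exists_len (D : RegularCantorData) : ∃ M : ℝ, 0 < M ∧ ∀ i, D.b i - D.a i ≤ M := by
  refine ⟨∑ i, (D.b i - D.a i), ?_, fun i => ?_⟩
  · exact Finset.sum_pos (fun i _ => sub_pos.2 (D.hab i)) ⟨⟨0, D.hk⟩, Finset.mem_univ _⟩
  · exact Finset.single_le_sum (f := fun i => D.b i - D.a i)
      (fun i _ => (sub_pos.2 (D.hab i)).le) (Finset.mem_univ i)

theorem distortion (D : RegularCantorData) : ∃ B : ℝ, 0 < B ∧ ∀ (n : ℕ) (u : ℕ → Fin D.k),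
    ∀ x ∈ D.cyl (n + 1) u, ∀ y ∈ D.cyl (n + 1) u, ∀ z ∈ D.cyl (n + 1) u,
      ∀ t ∈ D.cyl (n + 1) u,
      |D.ψ^[n] x - D.ψ^[n] y| * |z - t| ≤ B * (|D.ψ^[n] z - D.ψ^[n] t| * |x - y|) := by
  obtain ⟨lam, h1, hlam⟩ := D.expanding
  obtain ⟨C, r, hr, hH⟩ := D.holder
  obtain ⟨M, hM, hMi⟩ := D.exists_len
  set q : ℝ := (lam⁻¹) ^ (r : ℝ) with hq
  have hl0 : 0 < lam := by linarith
  have hq0 : 0 ≤ q := by positivity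
  have hq1 : q < 1 := Real.rpow_lt_one (by positivity) (inv_lt_one_of_one_lt₀ h1)
    (by exact_mod_cast hr)
  set E : ℝ := C * M ^ (r : ℝ) with hE
  have hE0 : 0 ≤ E := by positivity
  have key : ∀ (n : ℕ) (u : ℕ → Fin D.k),
    ∀ x ∈ D.cyl (n + 1) u, ∀ y ∈ D.cyl (n + 1) u, ∀ z ∈ D.cyl (n + 1) u,
      ∀ t ∈ D.cyl (n + 1) u,
      |D.ψ^[n] x - D.ψ^[n] y| * |z - t| ≤
        Real.exp (E * ∑ j ∈ Finset.range n, q ^ (j + 1)) *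
          (|D.ψ^[n] z - D.ψ^[n] t| * |x - y|) := by
    intro n
    induction n with
    | zero =>
      intro u x hx y hy z hz t ht
      simp [mul_comm]
    | succ n ih =>
      intro u x hx y hy z hz t ht
      have hdiam : ∀ x ∈ D.cyl (n + 1 + 1) u, ∀ y ∈ D.cyl (n + 1 + 1) u,
          |x - y| ≤ (lam⁻¹) ^ (n + 1) * M := by
        intro x hx y hy
        have h2 := D.expand_iter h1 hlam (n + 1) u (cyl_anti (by omega) u hx)
          (cyl_anti (by omega) u hy)
        have hx3 := mem_cyl.1 hx (n + 1) (by omega)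
        have hy3 := mem_cyl.1 hy (n + 1) (by omega)
        have h3 : |D.ψ^[n + 1] x - D.ψ^[n + 1] y| ≤ M := by
          rw [abs_le]
          have := hMi (u (n + 1))
          constructor <;> linarith [hx3.1, hx3.2, hy3.1, hy3.2]
        rw [inv_pow, inv_mul_eq_div, le_div_iff₀' (by positivity)]
        exact h2.trans h3
      have hstep := D.one_step (fun x hx => h1.le.trans (hlam x hx)) hH (u 0)
        (cyl_shift.1 hx).1 (cyl_shift.1 hy).1 (cyl_shift.1 hz).1 (cyl_shift.1 ht).1
        (hdiam x hx z hz) (hdiam x hx t ht) (hdiam y hy z hz) (hdiam y hy t ht)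
      have hfac : 1 + C * ((lam⁻¹) ^ (n + 1) * M) ^ (r : ℝ) ≤ Real.exp (E * q ^ (n + 1)) := by
        have : (C : ℝ) * ((lam⁻¹) ^ (n + 1) * M) ^ (r : ℝ) = E * q ^ (n + 1) := by
          rw [Real.mul_rpow (by positivity) hM.le, hE, hq, ← Real.rpow_natCast,
            ← Real.rpow_natCast, ← Real.rpow_mul (by positivity), ← Real.rpow_mul (by positivity),
            mul_comm (r : ℝ)]
          ring
        rw [this, add_comm]
        exact Real.add_one_le_exp _
      have hstep2 : |D.ψ x - D.ψ y| * |z - t| ≤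
          Real.exp (E * q ^ (n + 1)) * (|D.ψ z - D.ψ t| * |x - y|) :=
        hstep.trans (mul_le_mul_of_nonneg_right hfac (by positivity))
      have hih := ih (fun j => u (j + 1)) _ (cyl_shift.1 hx).2 _ (cyl_shift.1 hy).2
        _ (cyl_shift.1 hz).2 _ (cyl_shift.1 ht).2
      rw [Finset.sum_range_succ, mul_add, Real.exp_add]
      simp only [Function.iterate_succ_apply]
      set e1 := Real.exp (E * ∑ j ∈ Finset.range n, q ^ (j + 1))
      set e2 := Real.exp (E * q ^ (n + 1))
      have he1 : 0 < e1 := Real.exp_pos _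
      have he2 : 0 < e2 := Real.exp_pos _
      rcases eq_or_ne z t with rfl | hzt
      · simp
      rcases eq_or_ne x y with rfl | hxy
      · simp
      have hzt0 : 0 < |z - t| := abs_pos.2 (sub_ne_zero.2 hzt)
      have hxy0 : 0 < |x - y| := abs_pos.2 (sub_ne_zero.2 hxy)
      have ha : 0 < |D.ψ z - D.ψ t| := lt_of_lt_of_le (by positivity)
        (D.expand_one hlam (u 0) (cyl_shift.1 hz).1 (cyl_shift.1 ht).1)
      have hb : 0 < |D.ψ x - D.ψ y| := lt_of_lt_of_le (by positivity)
        (D.expand_one hlam (u 0) (cyl_shift.1 hx).1 (cyl_shift.1 hy).1)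
      set Q1 := |D.ψ^[n] (D.ψ x) - D.ψ^[n] (D.ψ y)|
      set Q2 := |D.ψ^[n] (D.ψ z) - D.ψ^[n] (D.ψ t)|
      have hmul := mul_le_mul hih hstep2 (by positivity) (by positivity)
      refine le_of_mul_le_mul_right (a := |D.ψ z - D.ψ t| * |D.ψ x - D.ψ y|) ?_ (by positivity)
      calc Q1 * |z - t| * (|D.ψ z - D.ψ t| * |D.ψ x - D.ψ y|)
          = Q1 * |D.ψ z - D.ψ t| * (|D.ψ x - D.ψ y| * |z - t|) := by ring
        _ ≤ _ := hmul
        _ = _ := by ring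
  refine ⟨Real.exp (E * (q / (1 - q))), Real.exp_pos _, ?_⟩
  intro n u x hx y hy z hz t ht
  refine (key n u x hx y hy z hz t ht).trans ?_
  have : ∑ j ∈ Finset.range n, q ^ (j + 1) ≤ q / (1 - q) := by
    have hsum : HasSum (fun j : ℕ => q ^ (j + 1)) (q / (1 - q)) := by
      have := (hasSum_geometric_of_lt_one hq0 hq1).mul_left q
      simpa [pow_succ', div_eq_mul_inv] using this
    exact sum_le_hasSum _ (fun j _ => by positivity) hsum
  gcongr

/-- The geometric package: a size `r n u` of every admissible cylinder. -/
theorem core (D : RegularCantorData) : ∃ (A q : ℝ) (r : ℕ → (ℕ → Fin D.k) → ℝ), 0 < A ∧ 0 < q ∧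
    q < 1 ∧ ∀ n u, D.Admissible (n + 1) u → 0 < r n u ∧ r n u ≤ A * q ^ n ∧
      (∀ x ∈ D.cyl (n + 1) u, ∀ y ∈ D.cyl (n + 1) u, |x - y| ≤ A * r n u) ∧
      (∀ x ∈ D.cyl (n + 1) u, ∀ y ∈ D.cyl (n + 1) u,
        |D.ψ^[n] x - D.ψ^[n] y| ≤ A / r n u * |x - y|) := by
  obtain ⟨lam, h1, hlam⟩ := D.expanding
  obtain ⟨M, hM, hMi⟩ := D.exists_len
  obtain ⟨B, hB, hdist⟩ := D.distortion
  have hl0 : 0 < lam := by linarith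
  have hex : ∀ n u, ∃ ρ : ℝ, D.Admissible (n + 1) u → 0 < ρ ∧ ρ ≤ M * (lam⁻¹) ^ n ∧
      (∀ x ∈ D.cyl (n + 1) u, ∀ y ∈ D.cyl (n + 1) u, |x - y| ≤ B * ρ) ∧
      (∀ x ∈ D.cyl (n + 1) u, ∀ y ∈ D.cyl (n + 1) u,
        |D.ψ^[n] x - D.ψ^[n] y| ≤ (B * M) / ρ * |x - y|) := by
    intro n u
    by_cases hu : D.Admissible (n + 1) u
    swap
    · exact ⟨0, fun h => absurd h hu⟩
    have hab := D.hab (u n)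
    obtain ⟨z, hz, hza⟩ := D.cyl_surj n u hu (left_mem_Icc.2 hab.le)
    obtain ⟨t, ht, hta⟩ := D.cyl_surj n u hu (right_mem_Icc.2 hab.le)
    have hlen : |D.ψ^[n] z - D.ψ^[n] t| = D.b (u n) - D.a (u n) := by
      rw [hza, hta, abs_sub_comm, abs_of_pos (sub_pos.2 hab)]
    have hl : 0 < D.b (u n) - D.a (u n) := sub_pos.2 hab
    have hρ : 0 < |z - t| := by
      rw [abs_pos, sub_ne_zero]
      rintro rfl
      rw [hza] at hta
      exact hab.ne hta
    refine ⟨|z - t|, fun _ => ⟨hρ, ?_, ?_, ?_⟩⟩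
    · have h2 := D.expand_iter h1 hlam n u (cyl_anti (by omega) u hz) (cyl_anti (by omega) u ht)
      rw [hlen] at h2
      rw [inv_pow, ← div_eq_mul_inv, le_div_iff₀' (by positivity)]
      exact h2.trans (hMi _)
    · intro x hx y hy
      have h2 := hdist n u z hz t ht x hx y hy
      have hx3 := mem_cyl.1 hx n (by omega)
      have hy3 := mem_cyl.1 hy n (by omega)
      have h3 : |D.ψ^[n] x - D.ψ^[n] y| ≤ D.b (u n) - D.a (u n) := by
        rw [abs_le]
        constructor <;> linarith [hx3.1, hx3.2, hy3.1, hy3.2]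
      rw [hlen] at h2
      refine le_of_mul_le_mul_left (a := D.b (u n) - D.a (u n)) ?_ hl
      calc _ ≤ _ := h2
        _ ≤ B * ((D.b (u n) - D.a (u n)) * |z - t|) := by gcongr
        _ = _ := by ring
    · intro x hx y hy
      have h2 := hdist n u x hx y hy z hz t ht
      rw [hlen] at h2
      rw [div_mul_eq_mul_div, le_div_iff₀ hρ]
      refine h2.trans ?_
      rw [mul_assoc]
      gcongr
      exact hMi _
  choose r hr using hex
  refine ⟨max (max M B) (B * M), lam⁻¹, r, lt_max_of_lt_left (lt_max_of_lt_left hM), by positivity,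
    inv_lt_one_of_one_lt₀ h1, fun n u hu => ?_⟩
  obtain ⟨h2, h3, h4, h5⟩ := hr n u hu
  refine ⟨h2, h3.trans ?_, fun x hx y hy => (h4 x hx y hy).trans ?_,
    fun x hx y hy => (h5 x hx y hy).trans ?_⟩
  · gcongr; exact (le_max_left _ _).trans (le_max_left _ _)
  · gcongr; exact (le_max_right _ _).trans (le_max_left _ _)
  · gcongr; exact le_max_right _ _

end RegularCantorData

/-! ### Part 3: returns to a letter, and the conclusion -/

namespace RegularCantorData

/-- Points of `K` that start in the interval of the letter `a` and return to it infinitely often. -/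
def recSet (D : RegularCantorData) (a : Fin D.k) : Set ℝ :=
  {x | x ∈ D.K ∧ x ∈ Icc (D.a a) (D.b a) ∧
    ∃ᶠ n in atTop, D.ψ^[n] x ∈ Icc (D.a a) (D.b a)}

/-- Extension of a finite word to a sequence. -/
def ext (D : RegularCantorData) {n : ℕ} (u : Fin (n + 1) → Fin D.k) : ℕ → Fin D.k :=
  fun j => u (Fin.ofNat (n + 1) j)

theorem ext_apply {D : RegularCantorData} {n : ℕ} (w : ℕ → Fin D.k) {j : ℕ} (hj : j < n + 1) :
    D.ext (fun i : Fin (n + 1) => w i) j = w j := by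
  simp [ext, Nat.mod_eq_of_lt hj]

open Classical in
/-- The loops of length `n` at the letter `a`. -/
def loops (D : RegularCantorData) (a : Fin D.k) (n : ℕ) : Finset (Fin (n + 1) → Fin D.k) :=
  Finset.univ.filter (fun u => D.ext u 0 = a ∧ D.ext u n = a ∧ D.Admissible (n + 1) (D.ext u))

theorem mem_loops {D : RegularCantorData} {a : Fin D.k} {n : ℕ} {u : Fin (n + 1) → Fin D.k} :
    u ∈ D.loops a n ↔ D.ext u 0 = a ∧ D.ext u n = a ∧ D.Admissible (n + 1) (D.ext u) := by
  simp [loops]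

theorem dimH_le_of_expand (T S : Set ℝ) (f : ℝ → ℝ)
    (h : ∀ x ∈ T, ∀ y ∈ T, |x - y| ≤ |f x - f y|) (hTS : ∀ x ∈ T, f x ∈ S) : dimH T ≤ dimH S := by
  have hanti : AntilipschitzWith 1 (fun x : T => f x) := by
    refine AntilipschitzWith.of_le_mul_dist fun x y => ?_
    simpa [Subtype.dist_eq, Real.dist_eq] using h x x.2 y y.2
  have h1 := hanti.le_dimH_image univ
  have h2 : dimH T = dimH (univ : Set T) := by
    have := (isometry_subtype_coe (s := T)).dimH_image univ
    rw [← this]; simp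
  rw [h2]
  refine h1.trans (dimH_mono ?_)
  rintro _ ⟨x, -, rfl⟩
  exact hTS x x.2

theorem dimH_preimage_iter (D : RegularCantorData) (S : Set ℝ) (j : ℕ) :
    dimH {x | x ∈ D.K ∧ D.ψ^[j] x ∈ S} ≤ dimH S := by
  obtain ⟨lam, h1, hlam⟩ := D.expanding
  induction j with
  | zero => exact dimH_mono fun x hx => hx.2
  | succ j ih =>
    have hsub : {x | x ∈ D.K ∧ D.ψ^[j + 1] x ∈ S} ⊆ ⋃ i : Fin D.k,
        {x | x ∈ Icc (D.a i) (D.b i) ∧ D.ψ x ∈ {x | x ∈ D.K ∧ D.ψ^[j] x ∈ S}} := by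
      rintro x ⟨hxK, hxS⟩
      obtain ⟨i, hi⟩ := mem_iUnion.1 (hxK 0)
      refine mem_iUnion.2 ⟨i, hi, fun n => ?_, ?_⟩
      · have := hxK (n + 1)
        rwa [Function.iterate_succ_apply] at this
      · rwa [Function.iterate_succ_apply] at hxS
    refine (dimH_mono hsub).trans ?_
    rw [dimH_iUnion]
    refine iSup_le fun i => le_trans ?_ ih
    refine dimH_le_of_expand _ _ D.ψ ?_ (fun x hx => hx.2)
    intro x hx y hy
    have := D.expand_one hlam i hx.1 hy.1
    nlinarith [abs_nonneg (x - y)]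

theorem dimH_K_le (D : RegularCantorData) : dimH D.K ≤ ⨆ a, dimH (D.recSet a) := by
  have hsub : D.K ⊆ ⋃ a : Fin D.k, ⋃ j : ℕ, {x | x ∈ D.K ∧ D.ψ^[j] x ∈ D.recSet a} := by
    intro x hx
    have : ∃ a : Fin D.k, ∃ᶠ n in atTop, D.ψ^[n] x ∈ Icc (D.a a) (D.b a) := by
      by_contra hcon
      push Not at hcon
      have hall : ∀ᶠ n in atTop, ∀ a, D.ψ^[n] x ∉ Icc (D.a a) (D.b a) :=
        Filter.eventually_all.2 fun a => hcon a
      obtain ⟨n, hn⟩ := hall.exists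
      obtain ⟨a, ha⟩ := mem_iUnion.1 (hx n)
      exact hn a ha
    obtain ⟨a, ha⟩ := this
    obtain ⟨j, hj⟩ := ha.exists
    refine mem_iUnion.2 ⟨a, mem_iUnion.2 ⟨j, hx, ?_, hj, ?_⟩⟩
    · intro n
      rw [← Function.iterate_add_apply]
      exact hx _
    · rw [Filter.frequently_atTop] at ha ⊢
      intro N
      obtain ⟨n, hn, hn2⟩ := ha (N + j)
      refine ⟨n - j, by omega, ?_⟩
      rw [← Function.iterate_add_apply, Nat.sub_add_cancel (by omega)]
      exact hn2
  refine (dimH_mono hsub).trans ?_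
  rw [dimH_iUnion]
  refine iSup_mono fun a => ?_
  rw [dimH_iUnion]
  exact iSup_le fun j => D.dimH_preimage_iter _ j

/-- A point of the recurrent set lies in cylinders of arbitrarily long loops. -/
theorem recSet_cover (D : RegularCantorData) (a : Fin D.k) (N : ℕ) {x : ℝ} (hx : x ∈ D.recSet a) :
    ∃ l : ℕ, ∃ u ∈ D.loops a (N + l), x ∈ D.cyl (N + l + 1) (D.ext u) := by
  obtain ⟨hK, hxa, hfreq⟩ := hx
  obtain ⟨n, hn, hna⟩ := Filter.frequently_atTop.1 hfreq N
  obtain ⟨l, rfl⟩ := Nat.exists_eq_add_of_le hn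
  have hK' : ∀ j, ∃ i, D.ψ^[j] x ∈ Icc (D.a i) (D.b i) := fun j => mem_iUnion.1 (hK j)
  choose w hw using hK'
  have huniq : ∀ j i, D.ψ^[j] x ∈ Icc (D.a i) (D.b i) → w j = i := by
    intro j i hi
    by_contra hne
    exact Set.disjoint_left.1 (D.disj _ _ hne) (hw j) hi
  refine ⟨l, fun i => w i, mem_loops.2 ⟨?_, ?_, ?_⟩, mem_cyl.2 fun j hj => ?_⟩
  · rw [ext_apply w (by omega)]; exact huniq 0 a hxa
  · rw [ext_apply w (by omega)]; exact huniq _ a hna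
  · intro j hj
    rw [ext_apply w (by omega), ext_apply w (by omega)]
    refine D.markov _ _ ⟨D.ψ^[j + 1] x, ?_, hw _⟩
    rw [Function.iterate_succ_apply']
    exact mem_image_of_mem _ (hw j)
  · rw [ext_apply w hj]; exact hw j

theorem recSet_dim_le (D : RegularCantorData) (a : Fin D.k) (A q : ℝ)
    (r : ℕ → (ℕ → Fin D.k) → ℝ) (hA : 0 < A) (hq : 0 < q) (hq1 : q < 1)
    (hr : ∀ n u, D.Admissible (n + 1) u → 0 < r n u ∧ r n u ≤ A * q ^ n ∧
      (∀ x ∈ D.cyl (n + 1) u, ∀ y ∈ D.cyl (n + 1) u, |x - y| ≤ A * r n u))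
    (s₀ s₁ : NNReal) (hs : s₀ < s₁) (N : ℕ)
    (hN : ∀ n ≥ N, ∑ u ∈ D.loops a n, r n (D.ext u) ^ (s₀ : ℝ) ≤ 1) :
    dimH (D.recSet a) ≤ s₁ := by
  classical
  have hδ : (0 : ℝ) < s₁ - s₀ := sub_pos.2 (by exact_mod_cast hs)
  have hs1 : (0 : ℝ) < s₁ := lt_of_le_of_lt s₀.coe_nonneg (by exact_mod_cast hs)
  set p : ℝ := q ^ ((s₁ : ℝ) - s₀) with hp
  have hp0 : 0 ≤ p := by positivity
  have hp1 : p < 1 := Real.rpow_lt_one hq.le hq1 hδ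
  set M : ℝ := A ^ (s₁ : ℝ) * A ^ ((s₁ : ℝ) - s₀) with hM
  have hM0 : 0 ≤ M := by positivity
  set t : (n : ℕ) → (Σ l : ℕ, (Fin (N + n + l + 1) → Fin D.k)) → Set ℝ :=
    fun n i => if i.2 ∈ D.loops a (N + n + i.1) then D.cyl (N + n + i.1 + 1) (D.ext i.2) else ∅
    with ht
  have hdiam : ∀ n, ∀ u ∈ D.loops a n, Metric.ediam (D.cyl (n + 1) (D.ext u)) ≤
      ENNReal.ofReal (A * r n (D.ext u)) := by
    intro n u hu
    refine Metric.ediam_le fun x hx y hy => ?_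
    rw [edist_dist, Real.dist_eq]
    exact ENNReal.ofReal_le_ofReal ((hr n _ (mem_loops.1 hu).2.2).2.2 x hx y hy)
  have hcover := Measure.hausdorffMeasure_le_liminf_tsum (s₁ : ℝ) (D.recSet a) (l := atTop)
    (fun n => ENNReal.ofReal (A * (A * q ^ n))) (by
      rw [← ENNReal.ofReal_zero]
      refine ENNReal.tendsto_ofReal ?_
      have := ((tendsto_pow_atTop_nhds_zero_of_lt_one hq.le hq1).const_mul A).const_mul A
      simpa using this) t
    (Eventually.of_forall fun n i => by
      by_cases hi : i.2 ∈ D.loops a (N + n + i.1)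
      · simp only [ht, hi, if_true]
        refine (hdiam _ _ hi).trans (ENNReal.ofReal_le_ofReal ?_)
        refine mul_le_mul_of_nonneg_left ?_ hA.le
        refine (hr _ _ (mem_loops.1 hi).2.2).2.1.trans ?_
        refine mul_le_mul_of_nonneg_left ?_ hA.le
        exact pow_le_pow_of_le_one hq.le hq1.le (by omega)
      · simp [ht, hi])
    (Eventually.of_forall fun n x hx => by
      obtain ⟨l, u, hu, hxu⟩ := D.recSet_cover a (N + n) hx
      refine mem_iUnion.2 ⟨⟨l, u⟩, ?_⟩
      simpa [ht, hu] using hxu)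
  refine dimH_le_of_hausdorffMeasure_ne_top ((lt_of_le_of_lt hcover ?_).ne)
  have hbound : ∀ n, ∑' i, Metric.ediam (t n i) ^ (s₁ : ℝ) ≤ ENNReal.ofReal (M * (1 - p)⁻¹) := by
    intro n
    rw [ENNReal.tsum_sigma']
    have hl : ∀ l, ∑' u, Metric.ediam (t n ⟨l, u⟩) ^ (s₁ : ℝ) ≤ ENNReal.ofReal (M * p ^ l) := by
      intro l
      rw [tsum_fintype]
      have e1 : ∑ u, Metric.ediam (t n ⟨l, u⟩) ^ (s₁ : ℝ) =
          ∑ u ∈ D.loops a (N + n + l),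
            Metric.ediam (D.cyl (N + n + l + 1) (D.ext u)) ^ (s₁ : ℝ) := by
        rw [← Finset.sum_subset (Finset.subset_univ (D.loops a (N + n + l)))]
        · refine Finset.sum_congr rfl fun u hu => ?_
          simp [ht, hu]
        · intro u _ hu
          simp only [ht, hu, if_false, Metric.ediam_empty]
          exact ENNReal.zero_rpow_of_pos hs1
      rw [e1]
      calc ∑ u ∈ D.loops a (N + n + l),
            Metric.ediam (D.cyl (N + n + l + 1) (D.ext u)) ^ (s₁ : ℝ)
          ≤ ∑ u ∈ D.loops a (N + n + l),
            ENNReal.ofReal (M * p ^ l * r (N + n + l) (D.ext u) ^ (s₀ : ℝ)) := by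
            refine Finset.sum_le_sum fun u hu => ?_
            obtain ⟨hr0, hr1, -⟩ := hr _ _ (mem_loops.1 hu).2.2
            refine (ENNReal.rpow_le_rpow (hdiam _ _ hu) s₁.coe_nonneg).trans ?_
            rw [ENNReal.ofReal_rpow_of_nonneg (by positivity) hs1.le]
            refine ENNReal.ofReal_le_ofReal ?_
            set ρ := r (N + n + l) (D.ext u)
            have e2 : ρ ^ (s₁ : ℝ) = ρ ^ (s₀ : ℝ) * ρ ^ ((s₁ : ℝ) - s₀) := by
              rw [← Real.rpow_add hr0]; congr 1; ring
            have e3 : ρ ^ ((s₁ : ℝ) - s₀) ≤ A ^ ((s₁ : ℝ) - s₀) * p ^ l := by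
              have e4 : ρ ≤ A * q ^ l := hr1.trans (mul_le_mul_of_nonneg_left
                (pow_le_pow_of_le_one hq.le hq1.le (by omega)) hA.le)
              calc ρ ^ ((s₁ : ℝ) - s₀) ≤ (A * q ^ l) ^ ((s₁ : ℝ) - s₀) :=
                    Real.rpow_le_rpow hr0.le e4 hδ.le
                _ = A ^ ((s₁ : ℝ) - s₀) * p ^ l := by
                    rw [Real.mul_rpow hA.le (by positivity), hp, ← Real.rpow_natCast,
                      ← Real.rpow_natCast, ← Real.rpow_mul hq.le, ← Real.rpow_mul hq.le,
                      mul_comm (l : ℝ)]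
            rw [Real.mul_rpow hA.le hr0.le, e2, hM]
            calc A ^ (s₁ : ℝ) * (ρ ^ (s₀ : ℝ) * ρ ^ ((s₁ : ℝ) - s₀))
                ≤ A ^ (s₁ : ℝ) * (ρ ^ (s₀ : ℝ) * (A ^ ((s₁ : ℝ) - s₀) * p ^ l)) := by gcongr
              _ = _ := by ring
        _ = ENNReal.ofReal (∑ u ∈ D.loops a (N + n + l),
              M * p ^ l * r (N + n + l) (D.ext u) ^ (s₀ : ℝ)) := by
            rw [ENNReal.ofReal_sum_of_nonneg]
            intro u hu
            have hr0 := (hr _ _ (mem_loops.1 hu).2.2).1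
            positivity
        _ ≤ ENNReal.ofReal (M * p ^ l) := by
            refine ENNReal.ofReal_le_ofReal ?_
            rw [← Finset.mul_sum]
            exact mul_le_of_le_one_right (by positivity) (hN _ (by omega))
    have hsum : HasSum (fun l : ℕ => M * p ^ l) (M * (1 - p)⁻¹) :=
      (hasSum_geometric_of_lt_one hp0 hp1).mul_left M
    calc ∑' l, ∑' u, Metric.ediam (t n ⟨l, u⟩) ^ (s₁ : ℝ)
        ≤ ∑' l, ENNReal.ofReal (M * p ^ l) := ENNReal.tsum_le_tsum hl
      _ = ENNReal.ofReal (M * (1 - p)⁻¹) := by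
        rw [← hsum.tsum_eq, ENNReal.ofReal_tsum_of_nonneg (fun l => by positivity) hsum.summable]
  refine lt_of_le_of_lt ?_ (ENNReal.ofReal_lt_top (r := M * (1 - p)⁻¹))
  calc _ ≤ liminf (fun _ : ℕ => ENNReal.ofReal (M * (1 - p)⁻¹)) atTop :=
        liminf_le_liminf (Eventually.of_forall hbound)
    _ = _ := liminf_const _

/-- The limit set of loops that are not subwords of `w` lies in the removed set. -/
theorem limit_subset (D : RegularCantorData) (a : Fin D.k) (n : ℕ) (hn : 0 < n)
    (F : Finset (Fin (n + 1) → Fin D.k))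
    (m : ℕ) (hm : 2 * n + 1 ≤ m) (w : ℕ → Fin D.k)
    (hw : ∀ u ∈ F, ∀ i ∈ Finset.range n, u ≠ fun j : Fin (n + 1) => w (i + 1 + j)) :
    {x | ∀ j : ℕ, (D.ψ^[n])^[j] x ∈ ⋃ u ∈ F, D.cyl (n + 1) (D.ext u)} ⊆ D.Kremoved m w := by
  intro x hx i
  have hx' : ∀ j : ℕ, ∃ u ∈ F, D.ψ^[n * j] x ∈ D.cyl (n + 1) (D.ext u) := by
    intro j
    have := hx j
    rw [← Function.iterate_mul] at this
    simpa using this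
  have hlt := Nat.mod_lt i hn
  have hdm := Nat.div_add_mod i n
  constructor
  · obtain ⟨u, hu, hxu⟩ := hx' (i / n)
    have := mem_cyl.1 hxu (i % n) (by omega)
    rw [← Function.iterate_add_apply, add_comm, hdm] at this
    exact mem_iUnion.2 ⟨_, this⟩
  · intro hcyl
    obtain ⟨u, hu, hxu⟩ := hx' (i / n + 1)
    refine hw u hu (n - i % n - 1) (Finset.mem_range.2 (by omega)) ?_
    have hy : D.ψ^[n * (i / n + 1)] x ∈ D.cyl (n + 1) (fun j => w (n - i % n - 1 + 1 + j)) := by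
      refine mem_cyl.2 fun j hj => ?_
      have := mem_cyl.1 hcyl (n - i % n - 1 + 1 + j) (by omega)
      rw [← Function.iterate_add_apply] at this ⊢
      have e : n - i % n - 1 + 1 + j + i = j + n * (i / n + 1) := by
        rw [mul_add, mul_one]
        omega
      rwa [e] at this
    funext j
    have := word_eq hxu hy j j.2
    simpa [ext] using this

theorem exists_large (A Q : ℝ) (hA : 0 < A) (hQ : 1 < Q) :
    ∀ᶠ n : ℕ in atTop, (n : ℝ) + 1 ≤ A * Q ^ n := by
  have h1 := tendsto_pow_const_div_const_pow_of_one_lt 1 hQ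
  have h2 := tendsto_pow_const_div_const_pow_of_one_lt 0 hQ
  have h3 := (h1.add h2).eventually (gt_mem_nhds (show (0 : ℝ) + 0 < A by simpa using hA))
  filter_upwards [h3] with n hn
  have hQn : 0 < Q ^ n := by positivity
  rw [← add_div, div_lt_iff₀ hQn] at hn
  simpa using hn.le

theorem main_nnreal (D : RegularCantorData) (s : NNReal) (hs : 0 < s)
    (hsK : (s : ℝ≥0∞) < dimH D.K) : ∃ m₀ : ℕ, ∀ m : ℕ, m₀ ≤ m → ∀ w : ℕ → Fin D.k,
      (s : ℝ≥0∞) ≤ dimH (D.Kremoved m w) := by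
  classical
  obtain ⟨a, ha⟩ := lt_iSup_iff.1 (hsK.trans_le D.dimH_K_le)
  obtain ⟨s₁, hs₁, hs₁a⟩ := ENNReal.lt_iff_exists_nnreal_btwn.1 ha
  obtain ⟨s₀, hs₀, hs₀₁⟩ := exists_between (ENNReal.coe_lt_coe.1 hs₁)
  obtain ⟨A, q, r, hA, hq, hq1, hr⟩ := D.core
  have hδ : (0 : ℝ) < s₀ - s := sub_pos.2 (by exact_mod_cast hs₀)
  have hsR : (0 : ℝ) < s := by exact_mod_cast hs
  set Q : ℝ := (q⁻¹) ^ ((s₀ : ℝ) - s) with hQ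
  have hQ1 : 1 < Q := Real.one_lt_rpow (one_lt_inv₀ hq |>.2 hq1) hδ
  have hlarge := exists_large ((A⁻¹) ^ (s₀ : ℝ)) Q (by positivity) hQ1
  obtain ⟨N, hN⟩ := eventually_atTop.1 hlarge
  obtain ⟨n, hnN, hn⟩ : ∃ n ≥ N + 1, 1 < ∑ u ∈ D.loops a n, r n (D.ext u) ^ (s₀ : ℝ) := by
    by_contra hcon
    push Not at hcon
    have := D.recSet_dim_le a A q r hA hq hq1
      (fun n u hu => ⟨(hr n u hu).1, (hr n u hu).2.1, (hr n u hu).2.2.1⟩) s₀ s₁ hs₀₁ (N + 1) hcon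
    exact absurd hs₁a (not_lt.2 this)
  have hn0 : 0 < n := by omega
  have hAQ := hN n (by omega)
  -- each normalized term
  set g : (Fin (n + 1) → Fin D.k) → ℝ := fun u => (r n (D.ext u) / A) ^ (s : ℝ) with hg
  have hg1 : ∀ u ∈ D.loops a n, g u < 1 := by
    intro u hu
    obtain ⟨h1, h2, -⟩ := hr _ _ (mem_loops.1 hu).2.2
    refine Real.rpow_lt_one (by positivity) ?_ hsR
    rw [div_lt_one hA]
    refine h2.trans_lt (mul_lt_of_lt_one_right hA (pow_lt_one₀ hq.le hq1 hn0.ne'))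
  have hg0 : ∀ u ∈ D.loops a n, 0 ≤ g u := by
    intro u hu
    obtain ⟨h1, -⟩ := hr _ _ (mem_loops.1 hu).2.2
    positivity
  have hgsum : (n : ℝ) + 1 ≤ ∑ u ∈ D.loops a n, g u := by
    have hterm : ∀ u ∈ D.loops a n,
        (A⁻¹) ^ (s₀ : ℝ) * Q ^ n * r n (D.ext u) ^ (s₀ : ℝ) ≤ g u := by
      intro u hu
      obtain ⟨h1, h2, -⟩ := hr _ _ (mem_loops.1 hu).2.2
      set ρ := r n (D.ext u)
      have hρA : 0 < ρ / A := by positivity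
      have e1 : (A⁻¹) ^ (s₀ : ℝ) * ρ ^ (s₀ : ℝ) = (ρ / A) ^ (s : ℝ) * (ρ / A) ^ ((s₀ : ℝ) - s) := by
        rw [← Real.rpow_add hρA, ← Real.mul_rpow (by positivity) h1.le]
        congr 1
        · rw [div_eq_inv_mul]
        · ring
      have e2 : (ρ / A) ^ ((s₀ : ℝ) - s) * Q ^ n ≤ 1 := by
        have e3 : Q ^ n = ((q⁻¹) ^ n) ^ ((s₀ : ℝ) - s) := by
          rw [hQ, ← Real.rpow_natCast, ← Real.rpow_natCast, ← Real.rpow_mul (by positivity),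
            ← Real.rpow_mul (by positivity), mul_comm]
        rw [e3, ← Real.mul_rpow hρA.le (by positivity)]
        refine Real.rpow_le_one (by positivity) ?_ hδ.le
        rw [inv_pow, ← div_eq_mul_inv, div_le_one (by positivity), div_le_iff₀ hA, mul_comm]
        exact h2
      calc (A⁻¹) ^ (s₀ : ℝ) * Q ^ n * ρ ^ (s₀ : ℝ)
          = (A⁻¹) ^ (s₀ : ℝ) * ρ ^ (s₀ : ℝ) * Q ^ n := by ring
        _ = (ρ / A) ^ (s : ℝ) * ((ρ / A) ^ ((s₀ : ℝ) - s) * Q ^ n) := by rw [e1]; ring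
        _ ≤ (ρ / A) ^ (s : ℝ) * 1 := by gcongr
        _ = g u := by rw [mul_one]
    calc (n : ℝ) + 1 ≤ (A⁻¹) ^ (s₀ : ℝ) * Q ^ n := hAQ
      _ ≤ (A⁻¹) ^ (s₀ : ℝ) * Q ^ n * ∑ u ∈ D.loops a n, r n (D.ext u) ^ (s₀ : ℝ) :=
        le_mul_of_one_le_right (by positivity) hn.le
      _ ≤ _ := by rw [Finset.mul_sum]; exact Finset.sum_le_sum hterm
  refine ⟨2 * n + 1, fun m hm w => ?_⟩
  set X : Finset (Fin (n + 1) → Fin D.k) :=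
    (Finset.range n).image (fun i => fun j : Fin (n + 1) => w (i + 1 + j)) with hX
  set F := D.loops a n \ X with hF
  have hFl : ∀ u ∈ F, u ∈ D.loops a n := fun u hu => (Finset.mem_sdiff.1 hu).1
  have hFsum : 1 ≤ ∑ u ∈ F, g u := by
    have h1 : ∑ u ∈ D.loops a n ∩ X, g u ≤ n := by
      calc ∑ u ∈ D.loops a n ∩ X, g u ≤ ∑ u ∈ D.loops a n ∩ X, (1 : ℝ) :=
            Finset.sum_le_sum fun u hu => (hg1 u (Finset.mem_inter.1 hu).1).le
        _ = (D.loops a n ∩ X).card := by simp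
        _ ≤ n := by
          have : (D.loops a n ∩ X).card ≤ n :=
            (Finset.card_le_card Finset.inter_subset_right).trans
              (Finset.card_image_le.trans (by simp))
          exact_mod_cast this
    have h2 := Finset.sum_inter_add_sum_sdiff (D.loops a n) X g
    linarith
  have hFne : F.Nonempty := by
    rw [Finset.nonempty_iff_ne_empty]
    intro h
    rw [h] at hFsum
    simp at hFsum
    linarith
  refine le_trans ?_ (dimH_mono (D.limit_subset a n hn0 F m hm w ?_))
  · refine ifs_lower_bound F (fun u => D.cyl (n + 1) (D.ext u)) (D.ψ^[n])
      (Icc (D.a a) (D.b a)) (fun u => Real.toNNReal (A / r n (D.ext u))) s hs ?_ hFne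
      (nonempty_Icc.2 (D.hab a).le) (fun u _ => D.cyl_isCompact n _) ?_ ?_ ?_ ?_ ?_ ?_
    · intro u hu
      by_contra hcon
      push Not at hcon
      have : F = {u} := Finset.eq_singleton_iff_unique_mem.2 ⟨hu, fun v hv => (hcon v hv).symm⟩
      rw [this, Finset.sum_singleton] at hFsum
      exact absurd hFsum (not_le.2 (hg1 u (hFl u hu)))
    · intro u hu
      obtain ⟨h1, -, -, h4⟩ := hr _ _ (mem_loops.1 (hFl u hu)).2.2
      refine LipschitzOnWith.of_dist_le_mul fun x hx y hy => ?_
      rw [Real.dist_eq, Real.dist_eq, Real.coe_toNNReal _ (by positivity)]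
      exact h4 x hx y hy
    · intro u hu
      obtain ⟨h1, -⟩ := hr _ _ (mem_loops.1 (hFl u hu)).2.2
      exact Real.toNNReal_pos.2 (by positivity)
    · intro u hu v hv huv
      rw [Set.disjoint_left]
      intro x hxu hxv
      refine huv (funext fun j => ?_)
      have := word_eq hxu hxv j j.2
      simpa [ext] using this
    · intro u hu x hx
      have h1 := (cyl_shift.1 hx).1
      rwa [(mem_loops.1 (hFl u hu)).1] at h1
    · intro u hu y hy
      obtain ⟨-, h2, h3⟩ := mem_loops.1 (hFl u hu)
      obtain ⟨x, hx, hxy⟩ := D.cyl_surj n (D.ext u) h3 (y := y) (by rwa [h2])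
      exact ⟨x, hx, hxy⟩
    · have e : ∑ u ∈ F, (((Real.toNNReal (A / r n (D.ext u)) : NNReal) : ℝ≥0∞)⁻¹) ^ (s : ℝ) =
          ENNReal.ofReal (∑ u ∈ F, g u) := by
        rw [ENNReal.ofReal_sum_of_nonneg (fun u hu => hg0 u (hFl u hu))]
        refine Finset.sum_congr rfl fun u hu => ?_
        obtain ⟨h1, -⟩ := hr _ _ (mem_loops.1 (hFl u hu)).2.2
        change (ENNReal.ofReal (A / r n (D.ext u)))⁻¹ ^ (s : ℝ) = _
        rw [← ENNReal.ofReal_inv_of_pos (by positivity), inv_div,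
          ENNReal.ofReal_rpow_of_nonneg (by positivity) hsR.le]
      rw [e, ← ENNReal.ofReal_one]
      exact ENNReal.ofReal_le_ofReal hFsum
  · intro u hu i hi heq
    refine (Finset.mem_sdiff.1 hu).2 ?_
    exact Finset.mem_image.2 ⟨i, hi, heq.symm⟩

end RegularCantorData

/-- Removing from a regular Cantor set `K` a cylinder of depth `m`
costs arbitrarily little Hausdorff dimension as `m → ∞`: for every `ε > 0` there is
`m₀` such that for every admissible word `b̲` of length `m ≥ m₀`,
`HD(K_b̲) ≥ HD(K) − ε`. -/
theorem dimension_loss_of_removed_cylinder (D : RegularCantorData) :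
    ∀ ε : ℝ≥0∞, 0 < ε → ∃ m₀ : ℕ, ∀ m : ℕ, m₀ ≤ m → ∀ w : ℕ → Fin D.k,
      D.Admissible m w → dimH D.K - ε ≤ dimH (D.Kremoved m w) := by
  intro ε hε
  by_cases hle : dimH D.K ≤ ε
  · refine ⟨0, fun m _ w _ => ?_⟩
    rw [tsub_eq_zero_of_le hle]
    exact zero_le
  push Not at hle
  have htop : dimH D.K ≠ ⊤ := by
    have h1 : dimH D.K ≤ 1 := Real.dimH_univ ▸ dimH_mono (subset_univ _)
    exact (h1.trans_lt ENNReal.one_lt_top).ne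
  have hlt : dimH D.K - ε < dimH D.K :=
    ENNReal.sub_lt_self htop (hε.trans hle).ne' hε.ne'
  obtain ⟨s, hs, hsK⟩ := ENNReal.lt_iff_exists_nnreal_btwn.1 hlt
  have hs0 : 0 < s := by
    have : (0 : ℝ≥0∞) < s := lt_of_le_of_lt zero_le hs
    exact_mod_cast this
  obtain ⟨m₀, hm₀⟩ := D.main_nnreal s hs0 hsK
  exact ⟨m₀, fun m hm w _ => hs.le.trans (hm₀ m hm w)⟩
end
end

section
/- Let Λ be a compact invariant set of a homeomorphism φ: M → M of a metric space M and f: M → ℝ a continuous function. Suppose x₀ ∈ Λ and y₀ ∈ Λ are such that there is a strictly increasing sequence (n_k) of natural numbers with φ^{n_k}(x₀) → y₀ and f(y₀) = limsup_{n→∞} f(φⁿ(x₀)). Then f(y₀) ≥ f(φⁿ(y₀)) for all n ∈ ℤ; i.e. f attains at y₀ the supremum of f along the full orbit of y₀. -/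
open Set Filter Topology

/-- The iterate `φⁿ`, `n : ℤ`, of a homeomorphism. -/
def hZIter {M : Type*} [TopologicalSpace M] (φ : M ≃ₜ M) (n : ℤ) (x : M) : M :=
  if 0 ≤ n then (⇑φ)^[n.toNat] x else (⇑φ.symm)^[(-n).toNat] x

/-- Let `Λ` be a compact invariant set of a homeomorphism `φ` of a
metric space and `f` continuous. If `x₀, y₀ ∈ Λ`, `(n_k)` is strictly increasing with
`φ^{n_k}(x₀) → y₀` and `f(y₀) = limsup_{n→∞} f(φⁿ(x₀))`, then `f(y₀) ≥ f(φⁿ(y₀))`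
for all `n ∈ ℤ`. -/
theorem limsup_accumulation_maximizes_orbit {M : Type*} [MetricSpace M]
    (φ : M ≃ₜ M) (Λ : Set M) (hcomp : IsCompact Λ) (hinv : φ '' Λ = Λ)
    (f : M → ℝ) (hf : Continuous f)
    (x₀ y₀ : M) (hx₀ : x₀ ∈ Λ) (hy₀ : y₀ ∈ Λ)
    (nk : ℕ → ℕ) (hmono : StrictMono nk)
    (hconv : Tendsto (fun k => (⇑φ)^[nk k] x₀) atTop (𝓝 y₀))
    (hval : f y₀ = limsup (fun n : ℕ => f ((⇑φ)^[n] x₀)) atTop) :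
    ∀ n : ℤ, f (hZIter φ n y₀) ≤ f y₀ := by
  have hmem : ∀ n : ℕ, (⇑φ)^[n] x₀ ∈ Λ := by
    intro n
    induction n with
    | zero => exact hx₀
    | succ k ih =>
      rw [Function.iterate_succ_apply', ← hinv]
      exact mem_image_of_mem _ ih
  have hbdd : IsBoundedUnder (· ≤ ·) atTop (fun n : ℕ => f ((⇑φ)^[n] x₀)) := by
    obtain ⟨C, hC⟩ := (hcomp.image hf).bddAbove
    exact isBoundedUnder_of ⟨C, fun n => hC (mem_image_of_mem f (hmem n))⟩
  have key : ∀ (m : ℕ → ℕ) (z : M), Tendsto m atTop atTop →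
      Tendsto (fun k => (⇑φ)^[m k] x₀) atTop (𝓝 z) → f z ≤ f y₀ := by
    intro m z hm hz
    refine le_of_forall_gt_imp_ge_of_dense fun c hc => ?_
    rw [hval] at hc
    have h1 := hm.eventually (eventually_lt_of_limsup_lt hc hbdd)
    exact le_of_tendsto ((hf.tendsto z).comp hz) (h1.mono fun k hk => le_of_lt hk)
  intro n
  unfold hZIter
  split_ifs with hn
  · refine key (fun k => n.toNat + nk k) _
      (tendsto_atTop_mono (fun k => Nat.le_add_left _ _) hmono.tendsto_atTop) ?_
    simp only [Function.iterate_add_apply]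
    exact ((φ.continuous.iterate n.toNat).tendsto y₀).comp hconv
  · refine key (fun k => nk k - (-n).toNat) _
      ((tendsto_sub_atTop_nat _).comp hmono.tendsto_atTop) ?_
    refine (((φ.symm.continuous.iterate (-n).toNat).tendsto y₀).comp hconv).congr' ?_
    filter_upwards [hmono.tendsto_atTop.eventually_ge_atTop (-n).toNat] with k hk
    have hinvl : Function.LeftInverse (⇑φ.symm) (⇑φ) := φ.symm_apply_apply
    have h2 : nk k = (-n).toNat + (nk k - (-n).toNat) := by omega
    simp only [Function.comp_apply]
    conv_lhs => rw [h2, Function.iterate_add_apply]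
    exact hinvl.iterate _ _
end

section
/- Let Λ be a compact invariant set of a homeomorphism φ: M → M of a metric space M and f: M → ℝ a continuous function. Then L(f,Λ) ⊂ M(f,Λ): every value limsup_{n→∞} f(φⁿ(x)) with x ∈ Λ equals sup_{n∈ℤ} f(φⁿ(y)) for some y ∈ Λ. -/
open Set Filter Topology

/-- The Markov dynamical spectrum `M(f,Λ) = { sup_{n∈ℤ} f(φⁿ(x)) : x ∈ Λ }`. -/
def markovSpec {M : Type*} [TopologicalSpace M] (φ : M ≃ₜ M) (f : M → ℝ) (Λ : Set M) :
    Set ℝ := {r | ∃ x ∈ Λ, r = ⨆ n : ℤ, f (hZIter φ n x)}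

/-- The Lagrange dynamical spectrum `L(f,Λ) = { limsup_{n→∞} f(φⁿ(x)) : x ∈ Λ }`. -/
def lagrangeSpec {M : Type*} [TopologicalSpace M] (φ : M ≃ₜ M) (f : M → ℝ) (Λ : Set M) :
    Set ℝ := {r | ∃ x ∈ Λ, r = limsup (fun n : ℕ => f ((⇑φ)^[n] x)) atTop}

/-- For a compact invariant set `Λ` of a homeomorphism `φ` of a
metric space and a continuous function `f`, one has `L(f,Λ) ⊆ M(f,Λ)`. -/
theorem lagrangeSpec_subset_markovSpec {M : Type*} [MetricSpace M]
    (φ : M ≃ₜ M) (Λ : Set M) (hcomp : IsCompact Λ) (hinv : φ '' Λ = Λ)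
    (f : M → ℝ) (hf : Continuous f) :
    lagrangeSpec φ f Λ ⊆ markovSpec φ f Λ := by
  rintro r ⟨x, hx, rfl⟩
  have hmem : ∀ n : ℕ, (⇑φ)^[n] x ∈ Λ := by
    intro n
    induction n with
    | zero => simpa using hx
    | succ k ih =>
      rw [Function.iterate_succ_apply', ← hinv]
      exact mem_image_of_mem _ ih
  obtain ⟨B, hB⟩ := (hcomp.image hf).bddAbove
  obtain ⟨b, hb⟩ := (hcomp.image hf).bddBelow
  have hle : ∀ n : ℕ, f ((⇑φ)^[n] x) ≤ B := fun n => hB (mem_image_of_mem _ (hmem n))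
  have hge : ∀ n : ℕ, b ≤ f ((⇑φ)^[n] x) := fun n => hb (mem_image_of_mem _ (hmem n))
  have hbdd : IsBoundedUnder (· ≤ ·) atTop (fun n : ℕ => f ((⇑φ)^[n] x)) :=
    isBoundedUnder_of ⟨B, hle⟩
  have hcob : IsCoboundedUnder (· ≤ ·) atTop (fun n : ℕ => f ((⇑φ)^[n] x)) :=
    (isBoundedUnder_of ⟨b, hge⟩ :
      IsBoundedUnder (· ≥ ·) atTop (fun n : ℕ => f ((⇑φ)^[n] x))).isCoboundedUnder_le
  set L := limsup (fun n : ℕ => f ((⇑φ)^[n] x)) atTop with hL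
  have hfreq : ∀ k : ℕ, ∃ᶠ n in atTop, L - 1 / ((k : ℝ) + 1) < f ((⇑φ)^[n] x) := by
    intro k
    apply frequently_lt_of_lt_limsup hcob
    rw [← hL]
    have : 0 < 1 / ((k : ℝ) + 1) := by positivity
    linarith
  obtain ⟨ns, hns, hval⟩ := extraction_forall_of_frequently hfreq
  obtain ⟨y, hy, ψ, hψ, hlim⟩ := hcomp.tendsto_subseq (fun k => hmem (ns k))
  have hnt : Tendsto (fun k => ns (ψ k)) atTop atTop := (hns.comp hψ).tendsto_atTop
  have hkey : ∀ (g : M → M) (q : ℕ → ℕ), Continuous g → Tendsto q atTop atTop →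
      (∀ᶠ n in atTop, g ((⇑φ)^[n] x) = (⇑φ)^[q n] x) → f (g y) ≤ L := by
    intro g q hg hq hgq
    have h1 : Tendsto (fun k => f (g ((⇑φ)^[ns (ψ k)] x))) atTop (𝓝 (f (g y))) :=
      ((hf.comp hg).tendsto y).comp hlim
    refine le_of_forall_pos_le_add fun ε hε => ?_
    have h2 : ∀ᶠ n in atTop, f ((⇑φ)^[n] x) < L + ε :=
      eventually_lt_of_limsup_lt (by rw [← hL]; linarith) hbdd
    refine le_of_tendsto h1 ?_
    filter_upwards [(hq.comp hnt).eventually h2, hnt.eventually hgq] with k hk1 hk2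
    rw [hk2]
    exact hk1.le
  have hall : ∀ m : ℤ, f (hZIter φ m y) ≤ L := by
    intro m
    unfold hZIter
    split_ifs with hm
    · refine hkey _ (fun n => m.toNat + n) (φ.continuous.iterate _)
        (tendsto_atTop_mono (fun n => Nat.le_add_left n _) tendsto_id) ?_
      exact Eventually.of_forall fun n => (Function.iterate_add_apply _ _ _ _).symm
    · refine hkey _ (fun n => n - (-m).toNat) (φ.symm.continuous.iterate _)
        (tendsto_sub_atTop_nat _) ?_
      filter_upwards [eventually_ge_atTop (-m).toNat] with n hn
      obtain ⟨d, rfl⟩ := Nat.exists_eq_add_of_le hn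
      rw [Function.iterate_add_apply, Nat.add_sub_cancel_left]
      exact (Function.LeftInverse.iterate φ.symm_apply_apply _) _
  have h0 : L ≤ f y := by
    have h1 : Tendsto (fun k => f ((⇑φ)^[ns (ψ k)] x)) atTop (𝓝 (f y)) :=
      (hf.tendsto y).comp hlim
    have h2 : Tendsto (fun k => L - 1 / ((ψ k : ℝ) + 1)) atTop (𝓝 (L - 0)) :=
      tendsto_const_nhds.sub
        ((tendsto_one_div_add_atTop_nhds_zero_nat (𝕜 := ℝ)).comp hψ.tendsto_atTop)
    rw [sub_zero] at h2
    exact le_of_tendsto_of_tendsto' h2 h1 fun k => (hval (ψ k)).le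
  refine ⟨y, hy, le_antisymm ?_ (ciSup_le hall)⟩
  have hbd : BddAbove (range fun n : ℤ => f (hZIter φ n y)) :=
    ⟨L, by rintro _ ⟨m, rfl⟩; exact hall m⟩
  refine h0.trans (le_trans (le_of_eq ?_) (le_ciSup hbd 0))
  simp [hZIter]
end
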